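/- arXiv:0805.4126 — 3 statements merged into one kernel-verified Lean document; each statement's English description precedes it below -/
import Mathlib

section
/- Let n ≥ 3 and let Λ be a generic configuration of l lines in ℙⁿ(ℂ), i.e., the weight vector with l₁ = l and all other entries zero. (i) Λ is feasible (generically some rational normal curve meets each line in exactly 2 points) in the following cases: n = 3 and l ≤ 6; or n > 3 and l ≤ ⌊n/2⌋ + 2. (ii) Λ is non-feasible (generically no rational normal curve meets every line in 2 points) in the following cases: n = 3 and l ≥ 7; n = 5 and l ≥ 6; n = 7 and l ≥ 7; or n > 3 with n ≠ 5, n ≠ 7 and l ≥ ⌊n/2⌋ + 3. -/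
noncomputable section

/-- Projective space `ℙⁿ(ℂ)`, the projectivization of `ℂ^{n+1}`. -/
abbrev PP (k : ℕ) := Projectivization ℂ (Fin (k + 1) → ℂ)

/-- The vector of the monomials `s^k t^(n-k)`, used to parametrize rational normal curves. -/
def veron (n : ℕ) (v : Fin 2 → ℂ) : Fin (n + 1) → ℂ :=
  fun k => v 0 ^ (k : ℕ) * v 1 ^ (n - (k : ℕ))

/-- `C ⊆ ℙⁿ` is a rational normal curve if it is the image of `[s:t] ↦ [F₀(s,t):⋯:Fₙ(s,t)]`
for a basis `F₀,…,Fₙ` of the degree-`n` binary forms; such a basis is encoded by an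
invertible matrix of coefficients applied to the monomial vector `veron`. -/
def IsRNC (n : ℕ) (C : Set (PP n)) : Prop :=
  ∃ M : Matrix (Fin (n + 1)) (Fin (n + 1)) ℂ, IsUnit M.det ∧
    C = {P : PP n | ∃ v : Fin 2 → ℂ, v ≠ 0 ∧ ∃ c : ℂ, c ≠ 0 ∧
      P.rep = c • M.mulVec (veron n v)}

/-- The linear subspace of `ℙⁿ` given as the projectivization of the column span of a matrix. -/
def projSet {n m : ℕ} (A : Matrix (Fin (n + 1)) (Fin m) ℂ) : Set (PP n) :=
  {P : PP n | P.rep ∈ Submodule.span ℂ (Set.range fun j => fun r => A r j)}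

/-- A configuration of weight `L = (l₀,…,l_{n-2})`: for each `i`, `lᵢ` matrices of size
`(n+1) × (i+1)`, whose column spans give the `i`-dimensional components. -/
abbrev Config (n : ℕ) (L : Fin (n - 1) → ℕ) :=
  (i : Fin (n - 1)) → Fin (L i) → Matrix (Fin (n + 1)) (Fin (i.1 + 1)) ℂ

/-- All matrices of the configuration have full rank. -/
def FullRank {n : ℕ} {L : Fin (n - 1) → ℕ} (A : Config n L) : Prop :=
  ∀ i j, (A i j).rank = i.1 + 1

/-- A curve `C` maximally intersects the configuration `A`: it meets every `i`-dimensional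
component in exactly `i+1` distinct points. -/
def MaxIntersects {n : ℕ} {L : Fin (n - 1) → ℕ} (C : Set (PP n)) (A : Config n L) : Prop :=
  ∀ i j, (C ∩ projSet (A i j)).ncard = i.1 + 1

/-- A property `Q` holds for a generic configuration of weight `L`: there is a nonzero
polynomial in the matrix entries such that `Q` holds at every full-rank tuple of matrices
where the polynomial does not vanish. -/
def GenHolds (n : ℕ) (L : Fin (n - 1) → ℕ) (Q : Config n L → Prop) : Prop :=
  ∃ F : MvPolynomial ((i : Fin (n - 1)) × (Fin (L i) × Fin (n + 1) × Fin (i.1 + 1))) ℂ,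
    F ≠ 0 ∧ ∀ A : Config n L, FullRank A →
      MvPolynomial.eval (fun p => A p.1 p.2.1 p.2.2.1 p.2.2.2) F ≠ 0 → Q A

/-- `L` is feasible: a generic configuration of weight `L` is maximally intersected
by some rational normal curve. -/
def Feasible (n : ℕ) (L : Fin (n - 1) → ℕ) : Prop :=
  GenHolds n L fun A => ∃ C : Set (PP n), IsRNC n C ∧ MaxIntersects C A

/-- `L` is non-feasible: for a generic configuration of weight `L`, no rational normal
curve maximally intersects it. -/
def NonFeasible (n : ℕ) (L : Fin (n - 1) → ℕ) : Prop :=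
  GenHolds n L fun A => ¬ ∃ C : Set (PP n), IsRNC n C ∧ MaxIntersects C A


open MvPolynomial in
lemma eval_aeval_comp {σ ι : Type} (Φ : ι → MvPolynomial σ ℂ) (x : σ → ℂ) (p : MvPolynomial ι ℂ) :
    eval x (aeval Φ p) = eval (fun i => eval x (Φ i)) p := by
  induction p using MvPolynomial.induction_on with
  | C a => simp
  | add p q hp hq => rw [map_add, map_add, map_add, hp, hq]
  | mul_X p i hp => rw [map_mul, map_mul, map_mul, hp, aeval_X, eval_X]

open MvPolynomial in
lemma dominant_aux {σ ι : Type} [Finite σ] [Finite ι] (Φ : ι → MvPolynomial σ ℂ)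
    (hΦ : AlgebraicIndependent ℂ Φ) (g : MvPolynomial σ ℂ) (hg : g ≠ 0) :
    ∃ F : MvPolynomial ι ℂ, F ≠ 0 ∧ ∀ y : ι → ℂ, eval y F ≠ 0 →
      ∃ x : σ → ℂ, eval x g ≠ 0 ∧ ∀ i, eval x (Φ i) = y i := by
  set f : MvPolynomial ι ℂ →ₐ[ℂ] MvPolynomial σ ℂ := aeval Φ with hf
  have hft : f.toRingHom.FiniteType := by
    have h1 : (algebraMap ℂ (MvPolynomial σ ℂ)).FiniteType :=
      RingHom.finiteType_algebraMap.mpr inferInstance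
    have h2 : f.toRingHom.comp (algebraMap ℂ (MvPolynomial ι ℂ)) = algebraMap ℂ (MvPolynomial σ ℂ) :=
      f.comp_algebraMap
    rw [← h2] at h1
    exact RingHom.FiniteType.of_comp_finiteType h1
  have hfp : f.toRingHom.FinitePresentation := RingHom.FinitePresentation.of_finiteType.mp hft
  have hc := PrimeSpectrum.isConstructible_comap_image hfp
    (PrimeSpectrum.isConstructible_basicOpen (f := g))
  obtain ⟨S, hS⟩ := PrimeSpectrum.exists_constructibleSetData_iff.mpr hc
  have hinj : Function.Injective f := hΦ
  have hbot : (⊥ : PrimeSpectrum (MvPolynomial ι ℂ)) ∈ S.toSet := by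
    rw [hS]
    refine ⟨⊥, ?_, ?_⟩
    · show g ∉ (⊥ : Ideal _)
      simpa using hg
    · ext x
      show f x ∈ (⊥ : Ideal _) ↔ x ∈ (⊥ : Ideal _)
      simp [map_eq_zero_iff f hinj]
  simp only [PrimeSpectrum.ConstructibleSetData.toSet, Set.mem_iUnion] at hbot
  obtain ⟨C, hCS, hC⟩ := hbot
  have hsub : C.toSet ⊆ PrimeSpectrum.comap f.toRingHom '' (PrimeSpectrum.basicOpen g) := by
    rw [← hS]
    intro x hx
    simp only [PrimeSpectrum.ConstructibleSetData.toSet, Set.mem_iUnion]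
    exact ⟨C, hCS, hx⟩
  simp only [PrimeSpectrum.BasicConstructibleSetData.toSet, Set.mem_sdiff,
    PrimeSpectrum.mem_zeroLocus, Set.singleton_subset_iff] at hC
  obtain ⟨hC1, hC2⟩ := hC
  refine ⟨C.f, fun h => hC2 (by rw [h]; exact Ideal.zero_mem _), fun y hy => ?_⟩
  let m : PrimeSpectrum (MvPolynomial ι ℂ) := ⟨vanishingIdeal ℂ {y}, inferInstance⟩
  have hm : m ∈ C.toSet := by
    simp only [PrimeSpectrum.BasicConstructibleSetData.toSet, Set.mem_sdiff,
      PrimeSpectrum.mem_zeroLocus, Set.singleton_subset_iff]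
    refine ⟨fun z hz => ?_, fun h => hy ?_⟩
    · have : z ∈ (⊥ : Ideal (MvPolynomial ι ℂ)) := hC1 hz
      rw [Ideal.mem_bot] at this
      rw [this]; exact Ideal.zero_mem _
    · have h2 := (mem_vanishingIdeal_singleton_iff y C.f).mp h
      simpa [aeval_eq_eval] using h2
  obtain ⟨p, hp, hpm⟩ := hsub hm
  have hgp : g ∉ p.asIdeal := hp
  have hpr := p.2
  rw [← MvPolynomial.IsPrime.vanishingIdeal_zeroLocus (K := ℂ) p.asIdeal] at hgp
  rw [mem_vanishingIdeal_iff] at hgp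
  push Not at hgp
  obtain ⟨x, hx, hxg⟩ := hgp
  refine ⟨x, by simpa [aeval_eq_eval] using hxg, fun i => ?_⟩
  have h3 : (X i - MvPolynomial.C (y i)) ∈ m.asIdeal :=
    (mem_vanishingIdeal_singleton_iff y _).mpr (by simp)
  rw [← hpm] at h3
  have h4 : f (X i - MvPolynomial.C (y i)) ∈ p.asIdeal := h3
  have h5 := mem_zeroLocus_iff.mp hx _ h4
  simp [hf] at h5
  simpa [aeval_eq_eval, sub_eq_zero] using h5

open MvPolynomial in
lemma algInd_of_surj {σ ι : Type} [Fintype σ] [Fintype ι] (Φ : ι → MvPolynomial σ ℂ)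
    (x₀ : σ → ℂ) (D : (σ → ℂ) →L[ℂ] (ι → ℂ))
    (hD : HasStrictFDerivAt (fun x : σ → ℂ => fun i => eval x (Φ i)) D x₀)
    (hs : Function.Surjective D) : AlgebraicIndependent ℂ Φ := by
  rw [algebraicIndependent_iff]
  intro p hp
  have h1 := hD.map_nhds_eq_of_surj (LinearMap.range_eq_top.mpr hs)
  have h2 : {y : ι → ℂ | eval y p = 0} ∈ nhds (fun i => eval x₀ (Φ i)) := by
    rw [← h1]
    refine Filter.mem_map.mpr (Filter.univ_mem' fun x => ?_)
    have := congrArg (eval x) hp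
    rw [map_zero] at this
    show eval (fun i => eval x (Φ i)) p = 0
    rw [← this, eval_aeval_comp]
  obtain ⟨ε, hε, hb⟩ := Metric.mem_nhds_iff.mp h2
  refine funext_set (fun i => Metric.ball (eval x₀ (Φ i)) ε) (fun i => ?_) ?_
  · exact infinite_of_mem_nhds _ (Metric.ball_mem_nhds _ hε)
  · intro x hx
    rw [map_zero]
    apply hb
    rw [← ball_pi _ hε] at *
    exact hx

open MvPolynomial in
lemma thin_aux {σ ι K : Type} [Fintype σ] [Fintype ι] [Fintype K]
    (hc : Fintype.card σ < Fintype.card ι) (Φ : K → ι → MvPolynomial σ ℂ) :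
    ∃ F : MvPolynomial ι ℂ, F ≠ 0 ∧ ∀ k (x : σ → ℂ), eval (fun i => eval x (Φ k i)) F = 0 := by
  have h : ∀ k, ∃ F : MvPolynomial ι ℂ, F ≠ 0 ∧ aeval (Φ k) F = 0 := by
    intro k
    by_contra hcon
    push Not at hcon
    have : AlgebraicIndependent ℂ (Φ k) := by
      rw [algebraicIndependent_iff]
      intro p hp
      by_contra hne
      exact hcon p hne hp
    have h2 := this.cardinalMk_le_trdeg
    rw [MvPolynomial.trdeg_of_isDomain] at h2
    simp at h2
    omega
  choose F hF hF2 using h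
  refine ⟨∏ k, F k, Finset.prod_ne_zero_iff.mpr fun k _ => hF k, fun k x => ?_⟩
  rw [map_prod]
  refine Finset.prod_eq_zero (Finset.mem_univ k) ?_
  have := congrArg (eval x) (hF2 k)
  rw [map_zero] at this
  rw [← this, eval_aeval_comp]

/-- lines version -/
def GoodL (n l : ℕ) (B : Fin l → Matrix (Fin (n + 1)) (Fin 2) ℂ) : Prop :=
  ∃ C : Set (PP n), IsRNC n C ∧ ∀ j, (C ∩ projSet (B j)).ncard = 2

lemma good_iff (n : ℕ) (hn : 3 ≤ n) (L : Fin (n - 1) → ℕ) (h0 : ∀ i, i.1 ≠ 1 → L i = 0)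
    (A : Config n L) : (∃ C : Set (PP n), IsRNC n C ∧ MaxIntersects C A) ↔
      GoodL n (L ⟨1, by omega⟩) (A ⟨1, by omega⟩) := by
  constructor
  · rintro ⟨C, h1, h2⟩
    exact ⟨C, h1, fun j => h2 _ j⟩
  · rintro ⟨C, h1, h2⟩
    refine ⟨C, h1, fun i j => ?_⟩
    by_cases hi : i.1 = 1
    · obtain ⟨i, hi'⟩ := i
      simp only at hi
      subst hi
      exact h2 j
    · have hj := j.2
      have := h0 i hi
      omega

lemma gen_bridge (n : ℕ) (hn : 3 ≤ n) (L : Fin (n - 1) → ℕ)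
    (Q : Config n L → Prop)
    (Q' : (Fin (L ⟨1, by omega⟩) → Matrix (Fin (n + 1)) (Fin 2) ℂ) → Prop)
    (hQ : ∀ A : Config n L, Q' (A ⟨1, by omega⟩) → Q A)
    (H : ∃ F : MvPolynomial (Fin (L ⟨1, by omega⟩) × Fin (n + 1) × Fin 2) ℂ, F ≠ 0 ∧
      ∀ B : Fin (L ⟨1, by omega⟩) → Matrix (Fin (n + 1)) (Fin 2) ℂ, (∀ j, (B j).rank = 2) →
        MvPolynomial.eval (fun p => B p.1 p.2.1 p.2.2) F ≠ 0 → Q' B) :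
    GenHolds n L Q := by
  obtain ⟨F, hF, h⟩ := H
  let e : Fin (L ⟨1, by omega⟩) × Fin (n + 1) × Fin 2 →
    ((i : Fin (n - 1)) × (Fin (L i) × Fin (n + 1) × Fin (i.1 + 1))) :=
      fun p => ⟨⟨1, by omega⟩, p⟩
  have he : Function.Injective e := fun a b hab => by
    simpa [e] using hab
  refine ⟨MvPolynomial.rename e F, ?_, fun A hA hev => ?_⟩
  · rwa [Ne, map_eq_zero_iff _ (MvPolynomial.rename_injective e he)]
  · apply hQ
    apply h
    · intro j; exact hA ⟨1, by omega⟩ j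
    · rw [MvPolynomial.eval_rename] at hev
      exact hev

/-- two Veronese columns -/
def Vm (n : ℕ) (v w : Fin 2 → ℂ) : Matrix (Fin (n + 1)) (Fin 2) ℂ :=
  Matrix.of fun r c => veron n ((![v, w] : Fin 2 → Fin 2 → ℂ) c) r

lemma mem_projSet_iff {n m : ℕ} (A : Matrix (Fin (n + 1)) (Fin m) ℂ) (P : PP n) :
    P ∈ projSet A ↔ ∃ a : Fin m → ℂ, A.mulVec a = P.rep := by
  unfold projSet
  rw [Set.mem_ofPred_eq, Submodule.mem_span_range_iff_exists_fun]
  refine exists_congr fun a => ?_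
  have : (∑ i, a i • fun r => A r i) = A.mulVec a := by
    ext r
    simp [Matrix.mulVec, dotProduct, mul_comm]
  rw [this]

lemma Vm_mulVec (n : ℕ) (v w : Fin 2 → ℂ) (b : Fin 2 → ℂ) :
    (Vm n v w).mulVec b = b 0 • veron n v + b 1 • veron n w := by
  ext r
  simp [Vm, Matrix.mulVec, dotProduct, mul_comm]

lemma param_of_good {n l : ℕ} {B : Fin l → Matrix (Fin (n + 1)) (Fin 2) ℂ} (h : GoodL n l B) :
    ∃ M : Matrix (Fin (n + 1)) (Fin (n + 1)) ℂ, ∃ v w : Fin l → Fin 2 → ℂ,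
      (∀ j, v j ≠ 0) ∧ (∀ j, w j ≠ 0) ∧ ∃ G : Fin l → Matrix (Fin 2) (Fin 2) ℂ,
        (∀ j, IsUnit (G j).det) ∧ ∀ j, M * Vm n (v j) (w j) = B j * G j := by
  obtain ⟨C, ⟨M, hM, rfl⟩, hC⟩ := h
  have key : ∀ j, ∃ v w : Fin 2 → ℂ, v ≠ 0 ∧ w ≠ 0 ∧ ∃ G : Matrix (Fin 2) (Fin 2) ℂ,
      IsUnit G.det ∧ M * Vm n v w = B j * G := by
    intro j
    obtain ⟨P, Q, hPQ, hS⟩ := Set.ncard_eq_two.mp (hC j)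
    have hP : P ∈ ({P, Q} : Set (PP n)) := by simp
    have hQ : Q ∈ ({P, Q} : Set (PP n)) := by simp
    rw [← hS] at hP hQ
    obtain ⟨⟨v, hv, c, hc, hPv⟩, hP2⟩ := hP
    obtain ⟨⟨w, hw, d, hd, hQw⟩, hQ2⟩ := hQ
    obtain ⟨a, ha⟩ := (mem_projSet_iff _ _).mp hP2
    obtain ⟨b, hb⟩ := (mem_projSet_iff _ _).mp hQ2
    let G : Matrix (Fin 2) (Fin 2) ℂ := Matrix.of fun r k => (![c⁻¹ • a, d⁻¹ • b] : Fin 2 → Fin 2 → ℂ) k r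
    have hGx : ∀ x : Fin 2 → ℂ, G.mulVec x = (x 0 * c⁻¹) • a + (x 1 * d⁻¹) • b := by
      intro x; ext r
      simp [G, Matrix.mulVec, dotProduct]; ring
    refine ⟨v, w, hv, hw, G, ?_, ?_⟩
    · rw [isUnit_iff_ne_zero]
      intro h0
      obtain ⟨x, hx, hx0⟩ := Matrix.exists_mulVec_eq_zero_iff.mpr h0
      have h1 : (x 0 * c⁻¹) • P.rep + (x 1 * d⁻¹) • Q.rep = 0 := by
        rw [← ha, ← hb, ← Matrix.mulVec_smul, ← Matrix.mulVec_smul, ← Matrix.mulVec_add, ← hGx,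
          hx0, Matrix.mulVec_zero]
      apply hPQ
      have hPr := P.rep_nonzero
      have hQr := Q.rep_nonzero
      have hx0' : x 0 ≠ 0 := by
        intro h
        have hx1 : x 1 ≠ 0 := by
          intro h'
          apply hx; ext i; fin_cases i <;> simp [h, h']
        rw [h] at h1
        simp at h1
        tauto
      rw [← P.mk_rep, ← Q.mk_rep, Projectivization.mk_eq_mk_iff']
      refine ⟨-(x 1 * d⁻¹) / (x 0 * c⁻¹), ?_⟩
      have h2 : (x 0 * c⁻¹) • P.rep = (-(x 1 * d⁻¹)) • Q.rep := by
        rw [neg_smul]; exact eq_neg_of_add_eq_zero_left h1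
      rw [div_eq_inv_mul, mul_smul, ← h2, smul_smul, inv_mul_cancel₀ (mul_ne_zero hx0' (inv_ne_zero hc)), one_smul]
    · apply Matrix.ext_of_mulVec_single
      intro i
      rw [← Matrix.mulVec_mulVec, ← Matrix.mulVec_mulVec, Vm_mulVec, hGx]
      simp only [Matrix.mulVec_add, Matrix.mulVec_smul]
      rw [ha, hb, hPv, hQw, smul_smul, smul_smul, mul_assoc, mul_assoc, inv_mul_cancel₀ hc, inv_mul_cancel₀ hd, mul_one, mul_one]
  choose v w hv hw G hG hE using key
  exact ⟨M, v, w, hv, hw, G, hG, hE⟩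

lemma veron_root {n : ℕ} (hn : 2 ≤ n) (p q : ℂ) (v : Fin 2 → ℂ) (hv : v ≠ 0) (b : Fin 2 → ℂ)
    (h : veron n v = b 0 • veron n ![p, 1] + b 1 • veron n ![q, 1]) :
    (v 0 - p * v 1) * (v 0 - q * v 1) = 0 := by
  have e : ∀ k (hk : k + 2 ≤ n), v 0 ^ k * v 1 ^ (n - 2 - k) * ((v 0 - p * v 1) * (v 0 - q * v 1)) = 0 := by
    intro k hk
    have h0 := congrFun h ⟨k, by omega⟩
    have h1 := congrFun h ⟨k + 1, by omega⟩
    have h2 := congrFun h ⟨k + 2, by omega⟩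
    simp only [veron, Pi.add_apply, Pi.smul_apply, smul_eq_mul, Matrix.cons_val_zero, Matrix.cons_val_one, one_pow, mul_one] at h0 h1 h2
    obtain ⟨m, rfl⟩ : ∃ m, n = k + 2 + m := ⟨n - (k + 2), by omega⟩
    have e0 : k + 2 + m - k = m + 2 := by omega
    have e1 : k + 2 + m - (k + 1) = m + 1 := by omega
    have e2 : k + 2 + m - (k + 2) = m := by omega
    have e3 : k + 2 + m - 2 - k = m := by omega
    rw [e0] at h0; rw [e1] at h1; rw [e2] at h2; rw [e3]
    linear_combination h2 - (p + q) * h1 + p * q * h0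
  by_cases h1 : v 1 = 0
  · have h0 : v 0 ≠ 0 := by
      intro h0; apply hv; ext i; fin_cases i <;> simp [h0, h1]
    have := e (n - 2) (by omega)
    simpa [h0] using this
  · have := e 0 (by omega)
    simpa [h1] using this

lemma veron_smul (n : ℕ) (c : ℂ) (v : Fin 2 → ℂ) : veron n (c • v) = c ^ n • veron n v := by
  ext k
  have : (k : ℕ) + (n - k) = n := by omega
  simp only [veron, Pi.smul_apply, smul_eq_mul, mul_pow]
  have h2 : c ^ n = c ^ (k : ℕ) * c ^ (n - (k : ℕ)) := by rw [← pow_add, this]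
  rw [h2]; ring

lemma veron_ne_zero {n : ℕ} {v : Fin 2 → ℂ} (hv : v ≠ 0) : veron n v ≠ 0 := by
  intro h
  apply hv
  have h0 := congrFun h 0
  have h1 := congrFun h (Fin.last n)
  simp [veron] at h0 h1
  ext i; fin_cases i
  · exact h1.1
  · exact h0.1

lemma good_of_param {n l : ℕ} (hn : 2 ≤ n) {B : Fin l → Matrix (Fin (n + 1)) (Fin 2) ℂ}
    (hB : ∀ j, (B j).rank = 2) (M : Matrix (Fin (n + 1)) (Fin (n + 1)) ℂ) (hM : IsUnit M.det)
    (p q : Fin l → ℂ) (G : Fin l → Matrix (Fin 2) (Fin 2) ℂ)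
    (h : ∀ j, B j = M * Vm n ![p j, 1] ![q j, 1] * G j) : GoodL n l B := by
  refine ⟨_, ⟨M, hM, rfl⟩, fun j => ?_⟩
  have hMinj : Function.Injective M.mulVec := Matrix.mulVec_injective_iff_isUnit.mpr ((Matrix.isUnit_iff_isUnit_det M).mpr hM)
  have hG : IsUnit (G j) := by
    have h1 : (G j).rank = 2 := by
      apply le_antisymm
      · simpa using (G j).rank_le_width
      · have h3 := Matrix.rank_mul_le_right (M * Vm n ![p j, 1] ![q j, 1]) (G j)
        rw [← h j, hB j] at h3
        exact h3
    rw [← Matrix.mulVec_surjective_iff_isUnit]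
    have h2 : LinearMap.range (G j).mulVecLin = ⊤ := by
      apply Submodule.eq_top_of_finrank_eq
      rw [← Matrix.rank, h1]; simp
    exact LinearMap.range_eq_top.mp h2
  have hGd := (Matrix.isUnit_iff_isUnit_det _).mp hG
  have hpq : p j ≠ q j := by
    intro hpq
    have h1 : Vm n ![p j, 1] ![q j, 1] = Matrix.vecMulVec (veron n ![p j, 1]) (fun _ => 1) := by
      ext r c
      rw [hpq]
      fin_cases c <;> simp [Vm, Matrix.vecMulVec]
    have h2 : (B j).rank ≤ 1 := by
      rw [h j, h1]
      exact (Matrix.rank_mul_le_left _ _).trans ((Matrix.rank_mul_le_right _ _).trans (Matrix.rank_vecMulVec_le _ _))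
    rw [hB j] at h2; omega
  have hne : ∀ x : ℂ, M.mulVec (veron n ![x, 1]) ≠ 0 := by
    intro x h0
    rw [← Matrix.mulVec_zero M] at h0
    exact veron_ne_zero (v := ![x, 1]) (fun h => by simpa using congrFun h 1) (hMinj h0)
  have hin : ∀ x : ℂ, (∃ b : Fin 2 → ℂ, (Vm n ![p j, 1] ![q j, 1]).mulVec b = veron n ![x, 1]) →
      Projectivization.mk ℂ _ (hne x) ∈ {P : PP n | ∃ v : Fin 2 → ℂ, v ≠ 0 ∧ ∃ c : ℂ, c ≠ 0 ∧
      P.rep = c • M.mulVec (veron n v)} ∩ projSet (B j) := by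
    rintro x ⟨b, hb⟩
    obtain ⟨c, hc⟩ := Projectivization.exists_smul_eq_mk_rep ℂ _ (hne x)
    refine ⟨⟨![x, 1], fun h => by simpa using congrFun h 1, c, c.ne_zero, hc.symm⟩, ?_⟩
    rw [mem_projSet_iff]
    refine ⟨(G j)⁻¹.mulVec ((c : ℂ) • b), ?_⟩
    rw [h j, Matrix.mulVec_mulVec, Matrix.mul_nonsing_inv_cancel_right _ _ hGd, Matrix.mulVec_smul,
      ← Matrix.mulVec_mulVec, hb]
    exact hc
  rw [Set.ncard_eq_two]
  refine ⟨Projectivization.mk ℂ _ (hne (p j)), Projectivization.mk ℂ _ (hne (q j)), ?_, ?_⟩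
  · intro heq
    rw [Projectivization.mk_eq_mk_iff'] at heq
    obtain ⟨a, ha⟩ := heq
    rw [← Matrix.mulVec_smul] at ha
    have h3 := hMinj ha
    have e0 := congrFun h3 ⟨0, by omega⟩
    have e1 := congrFun h3 ⟨1, by omega⟩
    simp [veron] at e0 e1
    rw [e0] at e1
    apply hpq; rw [← e1]; ring
  · apply Set.Subset.antisymm
    · rintro P ⟨⟨v, hv, c, hc, hPv⟩, hP⟩
      obtain ⟨a, ha⟩ := (mem_projSet_iff _ _).mp hP
      rw [h j, ← Matrix.mulVec_mulVec, ← Matrix.mulVec_mulVec, hPv, ← Matrix.mulVec_smul] at ha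
      have h3 := hMinj ha
      rw [Vm_mulVec] at h3
      set b := (G j).mulVec a
      have h4 := veron_root hn (p j) (q j) v hv (c⁻¹ • b) (by
        simp only [Pi.smul_apply, smul_eq_mul, mul_smul]
        rw [← smul_add, h3, smul_smul, inv_mul_cancel₀ hc, one_smul])
      have hfin : ∀ x : ℂ, v 0 - x * v 1 = 0 → P = Projectivization.mk ℂ _ (hne x) := by
        intro x hx
        have hvx : v = v 1 • ![x, 1] := by
          ext i; fin_cases i
          · simp; linear_combination hx
          · simp
        rw [← P.mk_rep, Projectivization.mk_eq_mk_iff']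
        refine ⟨c * (v 1) ^ n, ?_⟩
        rw [hPv]
        nth_rewrite 2 [hvx]
        rw [veron_smul, Matrix.mulVec_smul, smul_smul]
      rcases mul_eq_zero.mp h4 with h5 | h5
      · left; exact hfin _ h5
      · right; exact hfin _ h5
    · rintro P (rfl | rfl)
      · exact hin _ ⟨![1, 0], by rw [Vm_mulVec]; simp⟩
      · exact hin _ ⟨![0, 1], by rw [Vm_mulVec]; simp⟩

/-- binary forms as functions -/
def EForm (m : ℕ) : Submodule ℂ ((Fin 2 → ℂ) → ℂ) :=
  Submodule.span ℂ {f | ∃ i j : ℕ, i + j = m ∧ f = fun y => y 0 ^ i * y 1 ^ j}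

lemma EForm_mul {m : ℕ} (α β : ℂ) {f : (Fin 2 → ℂ) → ℂ} (hf : f ∈ EForm m) :
    (fun y => (α * y 0 + β * y 1) * f y) ∈ EForm (m + 1) := by
  induction hf using Submodule.span_induction with
  | mem f h =>
    obtain ⟨i, j, hij, rfl⟩ := h
    have h1 : (fun y : Fin 2 → ℂ => y 0 ^ (i + 1) * y 1 ^ j) ∈ EForm (m + 1) :=
      Submodule.subset_span ⟨i + 1, j, by omega, rfl⟩
    have h2 : (fun y : Fin 2 → ℂ => y 0 ^ i * y 1 ^ (j + 1)) ∈ EForm (m + 1) :=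
      Submodule.subset_span ⟨i, j + 1, by omega, rfl⟩
    convert! (EForm (m + 1)).add_mem ((EForm (m + 1)).smul_mem α h1)
      ((EForm (m + 1)).smul_mem β h2) using 1
    ext y; simp; ring
  | zero => convert! (EForm (m + 1)).zero_mem using 1; ext y; simp
  | add f g _ _ h1 h2 =>
    convert! (EForm (m + 1)).add_mem h1 h2 using 1
    ext y; simp; ring
  | smul a f _ h1 =>
    convert! (EForm (m + 1)).smul_mem a h1 using 1
    ext y; simp; ring

lemma EForm_pow (a b c d : ℂ) (i j : ℕ) :
    (fun y : Fin 2 → ℂ => (a * y 0 + b * y 1) ^ i * (c * y 0 + d * y 1) ^ j) ∈ EForm (i + j) := by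
  induction i with
  | zero =>
    induction j with
    | zero => exact Submodule.subset_span ⟨0, 0, rfl, by simp⟩
    | succ j ih =>
      convert! EForm_mul c d ih using 1
      ext y; simp; ring
  | succ i ih =>
    have := EForm_mul a b ih
    rw [show i + 1 + j = i + j + 1 by ring]
    convert! this using 1
    ext y; ring

lemma veron_equiv (n : ℕ) (N : Matrix (Fin 2) (Fin 2) ℂ) :
    ∃ S : Matrix (Fin (n + 1)) (Fin (n + 1)) ℂ, ∀ y, veron n (N.mulVec y) = S.mulVec (veron n y) := by
  have key : ∀ k : Fin (n + 1), ∃ s : Fin (n + 1) → ℂ, ∀ y,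
      veron n (N.mulVec y) k = ∑ i, s i * veron n y i := by
    intro k
    have h := EForm_pow (N 0 0) (N 0 1) (N 1 0) (N 1 1) k (n - k)
    rw [show (k : ℕ) + (n - k) = n by omega] at h
    have hset : {f : (Fin 2 → ℂ) → ℂ | ∃ i j : ℕ, i + j = n ∧ f = fun y => y 0 ^ i * y 1 ^ j} =
        Set.range (fun i : Fin (n + 1) => fun y : Fin 2 → ℂ => veron n y i) := by
      ext f
      constructor
      · rintro ⟨i, j, hij, rfl⟩
        refine ⟨⟨i, by omega⟩, ?_⟩
        ext y
        simp only [veron]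
        rw [show n - i = j by omega]
      · rintro ⟨i, rfl⟩
        exact ⟨i, n - i, by omega, rfl⟩
    unfold EForm at h
    rw [hset, Submodule.mem_span_range_iff_exists_fun] at h
    obtain ⟨s, hs⟩ := h
    refine ⟨s, fun y => ?_⟩
    have := congrFun hs y
    simp only [Finset.sum_apply, Pi.smul_apply, smul_eq_mul] at this
    rw [this]
    simp [veron, Matrix.mulVec, dotProduct]
  choose s hs using key
  refine ⟨Matrix.of s, fun y => ?_⟩
  ext k
  rw [hs]
  simp [Matrix.mulVec, dotProduct]

lemma vec_norm (y : Fin 2 → ℂ) (hy : y ≠ 0) :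
    ∃ c : ℂ, ∃ z : Fin 2 → ℂ, c ≠ 0 ∧ y = c • z ∧ (z = ![1, 0] ∨ ∃ t, z = ![t, 1]) := by
  by_cases h : y 1 = 0
  · refine ⟨y 0, ![1, 0], ?_, ?_, Or.inl rfl⟩
    · intro h0; apply hy; ext i; fin_cases i <;> simp [h0, h]
    · ext i; fin_cases i <;> simp [h]
  · refine ⟨y 1, ![y 0 / y 1, 1], h, ?_, Or.inr ⟨_, rfl⟩⟩
    ext i; fin_cases i
    · simp; field_simp
    · simp

lemma Vm_transf {n : ℕ} {N : Matrix (Fin 2) (Fin 2) ℂ} {S : Matrix (Fin (n + 1)) (Fin (n + 1)) ℂ}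
    (hS : ∀ y, veron n (N.mulVec y) = S.mulVec (veron n y)) (z z' : Fin 2 → ℂ) (c c' : ℂ) :
    Vm n (N.mulVec (c • z)) (N.mulVec (c' • z')) =
      S * Vm n z z' * Matrix.diagonal ![c ^ n, c' ^ n] := by
  apply Matrix.ext_of_mulVec_single
  intro i
  rw [← Matrix.mulVec_mulVec, ← Matrix.mulVec_mulVec, Vm_mulVec, Vm_mulVec, hS, hS, veron_smul, veron_smul]
  fin_cases i <;> simp [Matrix.mulVec_smul, Matrix.mulVec_diagonal, Matrix.mulVec_add]

lemma indep_of_rank {n : ℕ} {B : Matrix (Fin (n + 1)) (Fin 2) ℂ} (hB : B.rank = 2)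
    {M : Matrix (Fin (n + 1)) (Fin (n + 1)) ℂ} {v w : Fin 2 → ℂ} {G : Matrix (Fin 2) (Fin 2) ℂ}
    (hG : IsUnit G.det) (hv : v ≠ 0) (h : M * Vm n v w = B * G) :
    IsUnit (Matrix.det !![v 0, w 0; v 1, w 1]) := by
  rw [isUnit_iff_ne_zero, Matrix.det_fin_two_of]
  intro h0
  have hc : ∃ c : ℂ, w = c • v := by
    by_cases h1 : v 0 = 0
    · have h2 : v 1 ≠ 0 := by
        intro h2; apply hv; ext i; fin_cases i <;> simp [h1, h2]
      refine ⟨w 1 / v 1, ?_⟩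
      rw [h1] at h0
      have h3 : w 0 = 0 := by
        rcases mul_eq_zero.mp (show w 0 * v 1 = 0 by linear_combination -h0) with h | h
        · exact h
        · exact absurd h h2
      ext i; fin_cases i
      · simp [h1, h3]
      · simp; field_simp
    · refine ⟨w 0 / v 0, ?_⟩
      ext i; fin_cases i
      · simp; field_simp
      · simp; field_simp; linear_combination h0
  obtain ⟨c, rfl⟩ := hc
  have h1 : Vm n v (c • v) = Matrix.vecMulVec (veron n v) ![1, c ^ n] := by
    ext r k
    fin_cases k
    · simp [Vm, Matrix.vecMulVec]
    · simp [Vm, Matrix.vecMulVec, veron_smul, mul_comm]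
  have h2 : (B * G).rank ≤ 1 := by
    rw [← h, h1]
    exact (Matrix.rank_mul_le_right _ _).trans (Matrix.rank_vecMulVec_le _ _)
  rw [Matrix.rank_mul_eq_left_of_isUnit_det _ _ hG, hB] at h2
  omega

lemma param_norm {n l : ℕ} {B : Fin (l + 2) → Matrix (Fin (n + 1)) (Fin 2) ℂ}
    (hB : ∀ j, (B j).rank = 2) (h : GoodL n (l + 2) B) :
    ∃ M : Matrix (Fin (n + 1)) (Fin (n + 1)) ℂ, ∃ y : Fin (l + 2) × Fin 2 → Fin 2 → ℂ,
      ∃ G : Fin (l + 2) → Matrix (Fin 2) (Fin 2) ℂ,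
      (∀ x, y x = ![1, 0] ∨ ∃ t, y x = ![t, 1]) ∧ y (0, 0) = ![1, 0] ∧ y (0, 1) = ![0, 1] ∧
      (y (1, 0) = ![1, 0] ∨ y (1, 0) = ![0, 1] ∨ y (1, 0) = ![1, 1]) ∧
      ∀ j, B j = M * Vm n (y (j, 0)) (y (j, 1)) * G j := by
  obtain ⟨M, v, w, hv, hw, G, hG, hE⟩ := param_of_good h
  have hN0 := indep_of_rank (hB 0) (hG 0) (hv 0) (hE 0)
  have hN : ∃ N : Matrix (Fin 2) (Fin 2) ℂ, IsUnit N.det ∧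
      (∃ a : ℂ, v 0 = N.mulVec (a • ![1, 0])) ∧ (∃ a : ℂ, w 0 = N.mulVec (a • ![0, 1])) ∧
      ((∃ a : ℂ, v 1 = N.mulVec (a • ![1, 0])) ∨ (∃ a : ℂ, v 1 = N.mulVec (a • ![0, 1])) ∨
        (∃ a : ℂ, v 1 = N.mulVec (a • ![1, 1]))) := by
    set N0 : Matrix (Fin 2) (Fin 2) ℂ := !![v 0 0, w 0 0; v 0 1, w 0 1] with hN0def
    have hb : N0.mulVec (N0⁻¹.mulVec (v 1)) = v 1 := by
      rw [Matrix.mulVec_mulVec, Matrix.mul_nonsing_inv _ hN0, Matrix.one_mulVec]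
    set b := N0⁻¹.mulVec (v 1)
    have hv0 : v 0 = N0.mulVec ![1, 0] := by
      ext i; fin_cases i <;> simp [hN0def]
    have hw0 : w 0 = N0.mulVec ![0, 1] := by
      ext i; fin_cases i <;> simp [hN0def]
    by_cases h0 : b 0 = 0
    · refine ⟨N0, hN0, ⟨1, by simpa using hv0⟩, ⟨1, by simpa using hw0⟩, Or.inr (Or.inl ⟨b 1, ?_⟩)⟩
      rw [← hb]; congr 1; ext i; fin_cases i <;> simp [h0]
    by_cases h1 : b 1 = 0
    · refine ⟨N0, hN0, ⟨1, by simpa using hv0⟩, ⟨1, by simpa using hw0⟩, Or.inl ⟨b 0, ?_⟩⟩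
      rw [← hb]; congr 1; ext i; fin_cases i <;> simp [h1]
    refine ⟨N0 * Matrix.diagonal b, ?_, ⟨(b 0)⁻¹, ?_⟩, ⟨(b 1)⁻¹, ?_⟩, Or.inr (Or.inr ⟨1, ?_⟩)⟩
    · rw [Matrix.det_mul]
      refine hN0.mul ?_
      simp [h0, h1]
    · rw [hv0, ← Matrix.mulVec_mulVec]; congr 1; ext i; fin_cases i <;> simp [Matrix.mulVec_diagonal, h0]
    · rw [hw0, ← Matrix.mulVec_mulVec]; congr 1; ext i; fin_cases i <;> simp [Matrix.mulVec_diagonal, h1]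
    · rw [← hb, ← Matrix.mulVec_mulVec]; congr 1; ext i; fin_cases i <;> simp [Matrix.mulVec_diagonal]
  obtain ⟨N, hNu, hP0, hP1, hP2⟩ := hN
  obtain ⟨S, hS⟩ := veron_equiv n N
  have hnorm : ∀ x : Fin 2 → ℂ, x ≠ 0 → ∃ z : Fin 2 → ℂ, ∃ c : ℂ, x = N.mulVec (c • z) ∧
      (z = ![1, 0] ∨ ∃ t, z = ![t, 1]) := by
    intro x hx
    have h1 : N.mulVec (N⁻¹.mulVec x) = x := by
      rw [Matrix.mulVec_mulVec, Matrix.mul_nonsing_inv _ hNu, Matrix.one_mulVec]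
    obtain ⟨c, z, hc, hz, hz2⟩ := vec_norm (N⁻¹.mulVec x) (by
      intro h0; rw [h0, Matrix.mulVec_zero] at h1; exact hx h1.symm)
    exact ⟨z, c, by rw [← hz, h1], hz2⟩
  let u : Fin (l + 2) × Fin 2 → Fin 2 → ℂ := fun x => (![v x.1, w x.1] : Fin 2 → Fin 2 → ℂ) x.2
  have hu : ∀ x, u x ≠ 0 := by
    rintro ⟨j, i⟩
    fin_cases i
    · exact hv j
    · exact hw j
  have hall : ∀ x, ∃ z : Fin 2 → ℂ, ∃ c : ℂ, u x = N.mulVec (c • z) ∧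
      (z = ![1, 0] ∨ ∃ t, z = ![t, 1]) ∧ (x = (0, 0) → z = ![1, 0]) ∧ (x = (0, 1) → z = ![0, 1]) ∧
      (x = (1, 0) → (z = ![1, 0] ∨ z = ![0, 1] ∨ z = ![1, 1])) := by
    intro x
    by_cases h0 : x = (0, 0)
    · subst h0
      obtain ⟨a, ha⟩ := hP0
      exact ⟨![1, 0], a, ha, Or.inl rfl, by simp, by simp, by simp⟩
    by_cases h1 : x = (0, 1)
    · subst h1
      obtain ⟨a, ha⟩ := hP1
      exact ⟨![0, 1], a, ha, Or.inr ⟨0, rfl⟩, by simp, by simp, by simp⟩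
    by_cases h2 : x = (1, 0)
    · subst h2
      rcases hP2 with ⟨a, ha⟩ | ⟨a, ha⟩ | ⟨a, ha⟩
      · exact ⟨![1, 0], a, ha, Or.inl rfl, by simp, by simp, by simp⟩
      · exact ⟨![0, 1], a, ha, Or.inr ⟨0, rfl⟩, by simp, by simp, by simp⟩
      · exact ⟨![1, 1], a, ha, Or.inr ⟨1, rfl⟩, by simp, by simp, by simp⟩
    obtain ⟨z, c, hz, hz2⟩ := hnorm (u x) (hu x)
    exact ⟨z, c, hz, hz2, fun h => absurd h h0, fun h => absurd h h1, fun h => absurd h h2⟩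
  choose y c hy hy1 hy2 hy3 hy4 using hall
  refine ⟨M * S, y, fun j => Matrix.diagonal ![c (j, 0) ^ n, c (j, 1) ^ n] * (G j)⁻¹, hy1,
    hy2 _ rfl, hy3 _ rfl, hy4 _ rfl, fun j => ?_⟩
  have e := hE j
  have ev : v j = N.mulVec (c (j, 0) • y (j, 0)) := hy (j, 0)
  have ew : w j = N.mulVec (c (j, 1) • y (j, 1)) := hy (j, 1)
  rw [ev, ew, Vm_transf hS] at e
  calc B j = B j * G j * (G j)⁻¹ := by rw [Matrix.mul_nonsing_inv_cancel_right _ _ (hG j)]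
    _ = _ := by rw [← e]; simp only [Matrix.mul_assoc]

section
open MvPolynomial

/-- parameter index type -/
abbrev Sig (n l : ℕ) := (Fin (n + 1) × Fin (n + 1)) ⊕ ((Fin (l + 2) × Fin 2 × Fin 2) ⊕
  {x : Fin (l + 2) × Fin 2 // x ∉ ({(0, 0), (0, 1), (1, 0)} : Finset (Fin (l + 2) × Fin 2))})

/-- polynomial point of given kind -/
def ptPoly (n l : ℕ) (κ : Fin (l + 2) × Fin 2 → Fin 4) (x : Fin (l + 2) × Fin 2) :
    Fin 2 → MvPolynomial (Sig n l) ℂ :=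
  if κ x = 0 then ![1, 0] else if κ x = 1 then ![0, 1] else if κ x = 2 then ![1, 1] else
    ![if h : x ∉ ({(0, 0), (0, 1), (1, 0)} : Finset (Fin (l + 2) × Fin 2)) then
      X (Sum.inr (Sum.inr ⟨x, h⟩)) else 0, 1]

/-- entries of the parametrization -/
def entryPoly (n l : ℕ) (κ : Fin (l + 2) × Fin 2 → Fin 4) (i : Fin (l + 2) × Fin (n + 1) × Fin 2) :
    MvPolynomial (Sig n l) ℂ :=
  ∑ a : Fin 2, (∑ k : Fin (n + 1), X (Sum.inl (i.2.1, k)) *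
    (ptPoly n l κ (i.1, a) 0 ^ (k : ℕ) * ptPoly n l κ (i.1, a) 1 ^ (n - (k : ℕ)))) *
    X (Sum.inr (Sum.inl (i.1, a, i.2.2)))

lemma nonfeas_dim (n l : ℕ) (hc : (n + 1) * (n + 1) + 6 * (l + 2) < 2 * (l + 2) * (n + 1) + 3) :
    ∃ F : MvPolynomial (Fin (l + 2) × Fin (n + 1) × Fin 2) ℂ, F ≠ 0 ∧
      ∀ B : Fin (l + 2) → Matrix (Fin (n + 1)) (Fin 2) ℂ, (∀ j, (B j).rank = 2) →
        eval (fun p => B p.1 p.2.1 p.2.2) F ≠ 0 → ¬ GoodL n (l + 2) B := by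
  have hcard : Fintype.card (Sig n l) < Fintype.card (Fin (l + 2) × Fin (n + 1) × Fin 2) := by
    have h3 : (({(0, 0), (0, 1), (1, 0)} : Finset (Fin (l + 2) × Fin 2))).card = 3 := by
      rw [Finset.card_insert_of_notMem (by simp), Finset.card_insert_of_notMem (by simp),
        Finset.card_singleton]
    have h4 : Fintype.card {x : Fin (l + 2) × Fin 2 // x ∉ ({(0, 0), (0, 1), (1, 0)} : Finset (Fin (l + 2) × Fin 2))} = (l + 2) * 2 - 3 := by
      rw [Fintype.card_subtype_compl]
      simp only [Fintype.card_coe, h3]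
      simp
    rw [Fintype.card_sum, Fintype.card_sum, h4]
    simp only [Fintype.card_prod, Fintype.card_fin]
    have : (l + 2) * ((n + 1) * 2) = 2 * (l + 2) * (n + 1) := by ring
    rw [this]
    omega
  obtain ⟨F, hF, hF0⟩ := thin_aux hcard (entryPoly n l)
  refine ⟨F, hF, fun B hB hev hgood => hev ?_⟩
  obtain ⟨M, y, G, hy, hy0, hy1, hy2, hE⟩ := param_norm hB hgood
  have hκ : ∀ x : Fin (l + 2) × Fin 2, ∃ k : Fin 4, ∃ t : ℂ,
      y x = if k = 0 then ![1, 0] else if k = 1 then ![0, 1] else if k = 2 then ![1, 1] else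
        ![if x ∉ ({(0, 0), (0, 1), (1, 0)} : Finset (Fin (l + 2) × Fin 2)) then t else 0, 1] := by
    intro x
    by_cases h0 : x = (0, 0)
    · exact ⟨0, 0, by subst h0; simpa using hy0⟩
    by_cases h1 : x = (0, 1)
    · exact ⟨1, 0, by subst h1; simpa using hy1⟩
    by_cases h2 : x = (1, 0)
    · subst h2
      rcases hy2 with h | h | h
      · exact ⟨0, 0, by simpa using h⟩
      · exact ⟨1, 0, by simpa using h⟩
      · exact ⟨2, 0, by simpa using h⟩
    rcases hy x with h | ⟨t, h⟩
    · exact ⟨0, 0, by simpa using h⟩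
    · refine ⟨3, t, ?_⟩
      rw [h]
      simp [h0, h1, h2]
  choose κ t hκt using hκ
  let x : Sig n l → ℂ := Sum.elim (fun p => M p.1 p.2) (Sum.elim (fun p => G p.1 p.2.1 p.2.2) (fun p => t p.1))
  have hpt : ∀ z i, eval x (ptPoly n l κ z i) = y z i := by
    intro z i
    rw [hκt z]
    unfold ptPoly
    split_ifs <;> fin_cases i <;> simp [x]
  convert hF0 κ x using 2
  congr 1
  ext ⟨j, r, c⟩
  simp only [entryPoly, map_sum, map_mul, map_pow, hpt, eval_X]
  rw [hE j]
  simp [x, Matrix.mul_apply, Vm, veron]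
end

/-- second index of a quadric monomial -/
def c2 (a : Fin 5) (d : Fin 3) : Fin 5 :=
  (![![0, 1, 2], ![1, 2, 3], ![2, 3, 4], ![3, 4, 0], ![4, 0, 1]] : Fin 5 → Fin 3 → Fin 5) a d

/-- quadric conditions of five lines -/
def Kq {R : Type} [CommRing R] (B : Fin 5 → Fin 5 → Fin 2 → R) :
    Matrix (Fin 5 × Fin 3) (Fin 5 × Fin 3) R :=
  Matrix.of fun js ad => (![B js.1 ad.1 0 * B js.1 (c2 ad.1 ad.2) 0,
    B js.1 ad.1 0 * B js.1 (c2 ad.1 ad.2) 1 + B js.1 ad.1 1 * B js.1 (c2 ad.1 ad.2) 0,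
    B js.1 ad.1 1 * B js.1 (c2 ad.1 ad.2) 1] : Fin 3 → R) js.2

/-- explicit five lines -/
def B0q : Fin 5 → Fin 5 → Fin 2 → ℂ := ![![![0, 0], ![0, 1], ![1, 0], ![0, 1], ![0, 0]], ![![1, 0], ![0, 1], ![0, 0], ![0, 0], ![0, 1]], ![![1, 1], ![0, 0], ![0, 1], ![1, 0], ![0, 0]], ![![0, 1], ![0, 1], ![0, 1], ![0, 0], ![1, 0]], ![![1, 0], ![0, 0], ![0, 0], ![0, 1], ![1, 0]]]

set_option maxHeartbeats 2000000 in
lemma Kq_B0 : (Kq B0q).det ≠ 0 := by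
  intro h0
  obtain ⟨x, hne, hx⟩ := Matrix.exists_mulVec_eq_zero_iff.mpr h0
  apply hne
  have h00 := congrFun hx (0, 0)
  have h01 := congrFun hx (0, 1)
  have h02 := congrFun hx (0, 2)
  have h10 := congrFun hx (1, 0)
  have h11 := congrFun hx (1, 1)
  have h12 := congrFun hx (1, 2)
  have h20 := congrFun hx (2, 0)
  have h21 := congrFun hx (2, 1)
  have h22 := congrFun hx (2, 2)
  have h30 := congrFun hx (3, 0)
  have h31 := congrFun hx (3, 1)
  have h32 := congrFun hx (3, 2)
  have h40 := congrFun hx (4, 0)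
  have h41 := congrFun hx (4, 1)
  have h42 := congrFun hx (4, 2)
  simp [Matrix.mulVec, dotProduct, Kq, B0q, c2, Fintype.sum_prod_type, Fin.sum_univ_five, Fin.sum_univ_three] at h00 h01 h02 h10 h11 h12 h20 h21 h22 h30 h31 h32 h40 h41 h42
  have x00 : x (0, 0) = 0 := by linear_combination (1) * h10
  have x01 : x (0, 1) = 0 := by linear_combination (1) * h10 + (1) * h11 + (1) * h30 + (-1) * h40
  have x02 : x (0, 2) = 0 := by linear_combination (-1) * h00 + (-1) * h10 + (1) * h22
  have x10 : x (1, 0) = 0 := by linear_combination (1) * h00 + (-1) * h01 + (-1) * h10 + (-1) * h11 + (-1) * h20 + (1) * h21 + (-2) * h22 + (-1) * h30 + (1) * h32 + (1) * h40 + (1) * h42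
  have x11 : x (1, 1) = 0 := by linear_combination (-1) * h00 + (1) * h01 + (1) * h20 + (-1) * h21 + (1) * h22 + (-1) * h42
  have x12 : x (1, 2) = 0 := by linear_combination (-1) * h00 + (1) * h01 + (1) * h02 + (1) * h10 + (1) * h11 + (1) * h20 + (-1) * h21 + (2) * h22 + (1) * h30 + (-1) * h32 + (-1) * h40 + (-2) * h42
  have x20 : x (2, 0) = 0 := by linear_combination (1) * h00
  have x21 : x (2, 1) = 0 := by linear_combination (1) * h00 + (-1) * h20 + (1) * h21 + (-1) * h22 + (1) * h42
  have x22 : x (2, 2) = 0 := by linear_combination (1) * h00 + (-1) * h01 + (-1) * h11 + (-1) * h12 + (-1) * h20 + (1) * h21 + (-2) * h22 + (1) * h30 + (1) * h31 + (1) * h32 + (1) * h42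
  have x30 : x (3, 0) = 0 := by linear_combination (1) * h42
  have x31 : x (3, 1) = 0 := by linear_combination (1) * h10 + (-1) * h20 + (1) * h41 + (1) * h42
  have x32 : x (3, 2) = 0 := by linear_combination (-1) * h10 + (1) * h20 + (-1) * h42
  have x40 : x (4, 0) = 0 := by linear_combination (1) * h30
  have x41 : x (4, 1) = 0 := by linear_combination (-1) * h10 + (-1) * h30 + (1) * h40
  have x42 : x (4, 2) = 0 := by linear_combination (-1) * h00 + (1) * h01 + (1) * h10 + (1) * h11 + (1) * h12 + (1) * h20 + (-1) * h21 + (2) * h22 + (-1) * h32 + (-1) * h40 + (-1) * h42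
  ext ⟨a, d⟩
  fin_cases a <;> fin_cases d <;> assumption

lemma veron_dep (v : Fin 5 → Fin 2 → Fin 2 → ℂ) : ∃ r : Fin 5 × Fin 2 → ℂ, r ≠ 0 ∧
    ∀ k, ∑ i, r i * veron 8 (v i.1 i.2) k = 0 := by
  have h : ¬ LinearIndependent ℂ (fun i : Fin 5 × Fin 2 => veron 8 (v i.1 i.2)) := by
    intro h
    have := h.fintype_card_le_finrank
    simp at this
  rw [Fintype.not_linearIndependent_iff] at h
  obtain ⟨g, hg, i, hi⟩ := h
  refine ⟨g, fun h0 => hi (by rw [h0]; rfl), fun k => ?_⟩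
  have := congrFun hg k
  simpa [Finset.sum_apply] using this

lemma Kq_good {B : Fin 5 → Matrix (Fin 5) (Fin 2) ℂ} (h : GoodL 4 5 B) :
    (Kq (fun j r c => B j r c)).det = 0 := by
  obtain ⟨M, v, w, hv, hw, G, hG, hE⟩ := param_of_good h
  obtain ⟨r, hr, hr0⟩ := veron_dep (fun j => ![v j, w j])
  rw [← Matrix.exists_vecMul_eq_zero_iff]
  have hEq : ∀ j a, (M.mulVec (veron 4 (v j)) a = B j a 0 * G j 0 0 + B j a 1 * G j 1 0) ∧
      (M.mulVec (veron 4 (w j)) a = B j a 0 * G j 0 1 + B j a 1 * G j 1 1) := by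
    intro j a
    constructor
    · have := congrFun (congrFun (hE j) a) 0
      simpa [Matrix.mul_apply, Vm, Matrix.mulVec, dotProduct, Fin.sum_univ_two] using this
    · have := congrFun (congrFun (hE j) a) 1
      simpa [Matrix.mul_apply, Vm, Matrix.mulVec, dotProduct, Fin.sum_univ_two] using this
  have hvv : ∀ x y : Fin 5, ∑ j, (r (j, 0) * (veron 4 (v j) x * veron 4 (v j) y) +
      r (j, 1) * (veron 4 (w j) x * veron 4 (w j) y)) = 0 := by
    intro x y
    have h8 := hr0 ⟨x + y, by omega⟩
    rw [Fintype.sum_prod_type] at h8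
    rw [← h8]
    refine Finset.sum_congr rfl fun j _ => ?_
    have e : 8 - ((x : ℕ) + y) = (4 - x) + (4 - y) := by omega
    rw [Fin.sum_univ_two]
    simp only [veron, e, pow_add, Matrix.cons_val_zero, Matrix.cons_val_one]
    ring
  have hMM : ∀ a b : Fin 5, ∑ j, (r (j, 0) * (M.mulVec (veron 4 (v j)) a * M.mulVec (veron 4 (v j)) b) +
      r (j, 1) * (M.mulVec (veron 4 (w j)) a * M.mulVec (veron 4 (w j)) b)) = 0 := by
    intro a b
    have e : ∀ j, (r (j, 0) * (M.mulVec (veron 4 (v j)) a * M.mulVec (veron 4 (v j)) b) +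
      r (j, 1) * (M.mulVec (veron 4 (w j)) a * M.mulVec (veron 4 (w j)) b)) =
      ∑ x, ∑ y, M a x * M b y * (r (j, 0) * (veron 4 (v j) x * veron 4 (v j) y) +
      r (j, 1) * (veron 4 (w j) x * veron 4 (w j) y)) := by
      intro j
      simp only [Matrix.mulVec, dotProduct]
      rw [Finset.sum_mul_sum, Finset.sum_mul_sum]
      simp only [Finset.mul_sum, ← Finset.sum_add_distrib]
      refine Finset.sum_congr rfl fun x _ => Finset.sum_congr rfl fun y _ => ?_
      ring
    simp only [e]
    rw [Finset.sum_comm]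
    refine Finset.sum_eq_zero fun x _ => ?_
    rw [Finset.sum_comm]
    refine Finset.sum_eq_zero fun y _ => ?_
    rw [← Finset.mul_sum, hvv, mul_zero]
  let s : Fin 5 × Fin 3 → ℂ := fun p => (![r (p.1, 0) * G p.1 0 0 ^ 2 + r (p.1, 1) * G p.1 0 1 ^ 2,
    r (p.1, 0) * (G p.1 0 0 * G p.1 1 0) + r (p.1, 1) * (G p.1 0 1 * G p.1 1 1),
    r (p.1, 0) * G p.1 1 0 ^ 2 + r (p.1, 1) * G p.1 1 1 ^ 2] : Fin 3 → ℂ) p.2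
  refine ⟨s, fun hs => hr ?_, ?_⟩
  · have key : ∀ j, r (j, 0) = 0 ∧ r (j, 1) = 0 := by
      intro j
      have s0 := congrFun hs (j, 0)
      have s1 := congrFun hs (j, 1)
      have s2 := congrFun hs (j, 2)
      simp only [s, Matrix.cons_val_zero, Matrix.cons_val_one, Matrix.cons_val, Pi.zero_apply] at s0 s1 s2
      have hd := (hG j).ne_zero
      rw [Matrix.det_fin_two] at hd
      have hd2 := pow_ne_zero 2 hd
      constructor
      · refine (mul_eq_zero.mp (?_ : r (j, 0) * _ = 0)).resolve_right hd2
        linear_combination s0 * G j 1 1 ^ 2 - 2 * s1 * G j 0 1 * G j 1 1 + s2 * G j 0 1 ^ 2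
      · refine (mul_eq_zero.mp (?_ : r (j, 1) * _ = 0)).resolve_right hd2
        linear_combination s0 * G j 1 0 ^ 2 - 2 * s1 * G j 0 0 * G j 1 0 + s2 * G j 0 0 ^ 2
    ext ⟨j, i⟩
    fin_cases i
    · exact (key j).1
    · exact (key j).2
  · ext ⟨a, d⟩
    have := hMM a (c2 a d)
    simp only [hEq] at this
    simp only [Matrix.vecMul, dotProduct, Fintype.sum_prod_type, Pi.zero_apply]
    rw [← this]
    refine Finset.sum_congr rfl fun j _ => ?_
    simp only [Fin.sum_univ_three, s, Kq, Matrix.of_apply, Matrix.cons_val_zero, Matrix.cons_val_one, Matrix.cons_val]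
    ring

open MvPolynomial in
lemma nonfeas_four (l : ℕ) (hl : 5 ≤ l) :
    ∃ F : MvPolynomial (Fin l × Fin (4 + 1) × Fin 2) ℂ, F ≠ 0 ∧
      ∀ B : Fin l → Matrix (Fin (4 + 1)) (Fin 2) ℂ, (∀ j, (B j).rank = 2) →
        eval (fun p => B p.1 p.2.1 p.2.2) F ≠ 0 → ¬ GoodL 4 l B := by
  let F : MvPolynomial (Fin l × Fin (4 + 1) × Fin 2) ℂ :=
    (Kq (fun (j : Fin 5) (r : Fin 5) (c : Fin 2) => (X (Fin.castLE hl j, r, c) : MvPolynomial (Fin l × Fin (4 + 1) × Fin 2) ℂ))).det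
  have hev : ∀ z : Fin l × Fin (4 + 1) × Fin 2 → ℂ, eval z F =
      (Kq (fun j r c => z (Fin.castLE hl j, r, c))).det := by
    intro z
    simp only [F]
    rw [RingHom.map_det]
    congr 1
    ext ⟨j, s⟩ ⟨a, d⟩
    fin_cases s <;> simp [Kq]
  refine ⟨F, ?_, fun B _ hB hgood => hB ?_⟩
  · intro h0
    have := hev (fun p => if h : p.1.1 < 5 then B0q ⟨p.1.1, h⟩ p.2.1 p.2.2 else 0)
    rw [h0, map_zero] at this
    apply Kq_B0
    rw [this]
    congr 2
    ext j r c
    simp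
  · rw [hev]
    refine Kq_good (B := fun j => B (Fin.castLE hl j)) ?_
    obtain ⟨C, hC, h2⟩ := hgood
    exact ⟨C, hC, fun j => h2 _⟩

open MvPolynomial in
/-- parametrization polynomials -/
def Phi5 (n l : ℕ) (i : Fin l × Fin (n + 1) × Fin 2) :
    MvPolynomial ((Fin (n + 1) × Fin (n + 1)) ⊕ ((Fin l × Fin 2 × Fin 2) ⊕ (Fin l × Fin 2))) ℂ :=
  ∑ a, (∑ k : Fin (n + 1), X (Sum.inl (i.2.1, k)) * X (Sum.inr (Sum.inr (i.1, a))) ^ (k : ℕ)) *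
    X (Sum.inr (Sum.inl (i.1, a, i.2.2)))

open MvPolynomial in
lemma eval_contDiff {σ : Type} [Fintype σ] (p : MvPolynomial σ ℂ) :
    ContDiff ℂ 1 (fun x : σ → ℂ => eval x p) := by
  induction p using MvPolynomial.induction_on with
  | C a => simpa using contDiff_const
  | add p q hp hq => simpa using hp.add hq
  | mul_X p i hp => simpa using hp.mul (contDiff_apply ℂ ℂ i)

open MvPolynomial in
lemma feas_of_rigid (n l : ℕ) (hn : 2 ≤ n) (t : Fin l × Fin 2 → ℂ)
    (H : ∀ φ : Fin l → Fin 2 → Fin (n + 1) → ℂ,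
      (∀ r k : Fin (n + 1), ∑ j, ∑ c, φ j c r * t (j, c) ^ (k : ℕ) = 0) →
      (∀ j c, ∑ r : Fin (n + 1), φ j c r * ((r : ℕ) * t (j, c) ^ ((r : ℕ) - 1)) = 0) →
      (∀ j c a, ∑ r : Fin (n + 1), φ j c r * t (j, a) ^ (r : ℕ) = 0) → φ = 0) :
    ∃ F : MvPolynomial (Fin l × Fin (n + 1) × Fin 2) ℂ, F ≠ 0 ∧
      ∀ B : Fin l → Matrix (Fin (n + 1)) (Fin 2) ℂ, (∀ j, (B j).rank = 2) →
        eval (fun p => B p.1 p.2.1 p.2.2) F ≠ 0 → GoodL n l B := by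
  let x₀ : ((Fin (n + 1) × Fin (n + 1)) ⊕ ((Fin l × Fin 2 × Fin 2) ⊕ (Fin l × Fin 2))) → ℂ :=
    Sum.elim (fun q => if q.1 = q.2 then 1 else 0)
      (Sum.elim (fun q => if q.2.1 = q.2.2 then 1 else 0) t)
  have hcd : ContDiff ℂ 1 (fun x i => eval x (Phi5 n l i)) :=
    contDiff_pi.mpr fun i => eval_contDiff _
  have hD := hcd.contDiffAt.hasStrictFDerivAt (x := x₀) (by simp)
  set D := fderiv ℂ (fun x i => eval x (Phi5 n l i)) x₀ with hDdef
  have hDv : ∀ v j r c, D v (j, r, c) = ∑ k : Fin (n + 1), v (Sum.inl (r, k)) * t (j, c) ^ (k : ℕ) +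
      (r : ℕ) * t (j, c) ^ ((r : ℕ) - 1) * v (Sum.inr (Sum.inr (j, c))) +
      ∑ a, t (j, a) ^ (r : ℕ) * v (Sum.inr (Sum.inl (j, a, c))) := by
    intro v j r c
    have h1 : HasDerivAt (fun s : ℂ => x₀ + s • v) v 0 := by
      have := ((hasDerivAt_id (0 : ℂ)).smul_const v).const_add x₀
      simpa using this
    have hD' : HasFDerivAt (fun x i => eval x (Phi5 n l i)) D (x₀ + (0 : ℂ) • v) := by
      simpa using hD.hasFDerivAt
    have h2 := (hasDerivAt_pi.mp (hD'.comp_hasDerivAt (0 : ℂ) h1)) (j, r, c)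
    refine h2.unique ?_
    have hlin : ∀ i, HasDerivAt (fun s : ℂ => x₀ i + s * v i) (v i) 0 := by
      intro i
      simpa using ((hasDerivAt_id (0 : ℂ)).mul_const (v i)).const_add (x₀ i)
    have h3 := HasDerivAt.fun_sum (u := Finset.univ) fun (a : Fin 2) _ =>
      (HasDerivAt.fun_sum (u := Finset.univ) fun (k : Fin (n + 1)) _ =>
        (hlin (Sum.inl (r, k))).fun_mul ((hlin (Sum.inr (Sum.inr (j, a)))).fun_pow (k : ℕ))).fun_mul
        (hlin (Sum.inr (Sum.inl (j, a, c))))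
    convert h3 using 1
    · ext s
      simp [Phi5]
    · fin_cases c <;> simp [x₀, Fin.sum_univ_two, Finset.sum_add_distrib] <;> ring
  have hsurj : Function.Surjective D := by
    refine (LinearMap.range_eq_top (f := D.toLinearMap)).mp ?_
    by_contra hne
    obtain ⟨f, hf0, hf⟩ := Submodule.exists_le_ker_of_lt_top _ (lt_top_iff_ne_top.mpr hne)
    apply hf0
    have hsum : ∀ y, f y = ∑ j, ∑ c, ∑ r, f (Pi.single (j, r, c) 1) * y (j, r, c) := by
      intro y
      conv_lhs => rw [LinearMap.pi_apply_eq_sum_univ f y]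
      rw [Fintype.sum_prod_type]
      refine Finset.sum_congr rfl fun j _ => ?_
      rw [Fintype.sum_prod_type_right]
      refine Finset.sum_congr rfl fun c _ => Finset.sum_congr rfl fun r _ => ?_
      rw [smul_eq_mul, mul_comm]
      congr 2
      ext i
      simp [Pi.single_apply, eq_comm]
    have hz : ∀ v, ∑ j, ∑ c, ∑ r, f (Pi.single (j, r, c) 1) * D v (j, r, c) = 0 := by
      intro v
      rw [← hsum]
      exact hf ⟨v, rfl⟩
    have := H (fun j c r => f (Pi.single (j, r, c) 1)) ?_ ?_ ?_
    · ext i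
      have := congrFun (congrFun (congrFun this i.1) i.2.2) i.2.1
      simpa using this
    · intro r k
      have := hz (Sum.elim (Pi.single (r, k) 1) 0)
      simp only [hDv] at this
      simpa [Pi.single_apply, Prod.mk.injEq, ite_and, Finset.sum_ite_eq] using this
    · intro j c
      have := hz (Sum.elim 0 (Sum.elim 0 (Pi.single (j, c) 1)))
      simp only [hDv] at this
      simpa [Pi.single_apply, Prod.mk.injEq, ite_and, Finset.sum_ite_eq] using this
    · intro j c a
      have := hz (Sum.elim 0 (Sum.elim (Pi.single (j, a, c) 1) 0))
      simp only [hDv] at this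
      simpa [Pi.single_apply, Prod.mk.injEq, ite_and, Finset.sum_ite_eq] using this
  have hAI := algInd_of_surj _ x₀ D hD hsurj
  let g : MvPolynomial ((Fin (n + 1) × Fin (n + 1)) ⊕ ((Fin l × Fin 2 × Fin 2) ⊕ (Fin l × Fin 2))) ℂ :=
    (Matrix.of fun r k => X (Sum.inl (r, k)) : Matrix (Fin (n + 1)) (Fin (n + 1)) _).det
  have hge : ∀ x, eval x g = (Matrix.of fun r k => x (Sum.inl (r, k)) : Matrix (Fin (n + 1)) (Fin (n + 1)) ℂ).det := by
    intro x
    simp only [g]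
    rw [RingHom.map_det]
    congr 1
    ext r k
    simp
  have hg : g ≠ 0 := by
    intro h0
    have h1 := hge x₀
    rw [h0, map_zero] at h1
    have : (Matrix.of fun r k => x₀ (Sum.inl (r, k)) : Matrix (Fin (n + 1)) (Fin (n + 1)) ℂ) = 1 := by
      ext r k
      simp [x₀, Matrix.one_apply]
    rw [this] at h1
    simp at h1
  obtain ⟨F, hF, hd⟩ := dominant_aux _ hAI g hg
  refine ⟨F, hF, fun B hB he => ?_⟩
  obtain ⟨x, hx, hΦ⟩ := hd _ he
  rw [hge] at hx
  refine good_of_param hn hB _ (isUnit_iff_ne_zero.mpr hx) (fun j => x (Sum.inr (Sum.inr (j, 0))))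
    (fun j => x (Sum.inr (Sum.inr (j, 1)))) (fun j => Matrix.of fun a c => x (Sum.inr (Sum.inl (j, a, c)))) ?_
  intro j
  ext r c
  rw [← hΦ (j, r, c)]
  simp [Phi5, Matrix.mul_apply, Vm, veron, Fin.sum_univ_two]

open Polynomial in
lemma ker_quad {I : Type} [Fintype I] [DecidableEq I] (n : ℕ) (hc : Fintype.card I = n + 4)
    (t : I → ℂ) (ht : Function.Injective t) (u : I → ℂ)
    (hu : ∀ k ≤ n, ∑ x, u x * t x ^ k = 0) :
    ∃ q : ℂ[X], q.natDegree ≤ 2 ∧ ∀ x, u x * ∏ z ∈ Finset.univ.erase x, (t x - t z) = q.eval (t x) := by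
  set w : I → ℂ := fun x => ∏ z ∈ Finset.univ.erase x, (t x - t z) with hw
  have hinj : Set.InjOn t (Finset.univ : Finset I) := ht.injOn
  have hw0 : ∀ x, w x ≠ 0 := by
    intro x
    refine Finset.prod_ne_zero_iff.mpr fun z hz => sub_ne_zero.mpr fun h => ?_
    exact (Finset.ne_of_mem_erase hz) (ht h).symm
  set q : ℂ[X] := Lagrange.interpolate Finset.univ t (fun x => u x * w x) with hq
  have hev : ∀ x, q.eval (t x) = u x * w x := fun x =>
    Lagrange.eval_interpolate_at_node _ hinj (Finset.mem_univ x)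
  have hdeg : q.degree < (n + 4 : ℕ) := by
    have := Lagrange.degree_interpolate_lt (fun x => u x * w x) hinj
    rwa [Finset.card_univ, hc] at this
  have key : ∀ d ≤ n + 1, q.degree < (n + 4 - d : ℕ) := by
    intro d
    induction d with
    | zero => intro _; exact hdeg
    | succ d ih =>
      intro hd
      have ih := ih (by omega)
      have hX : (q * X ^ d).degree < (((Finset.univ : Finset I).card : ℕ) : WithBot ℕ) := by
        rw [Finset.card_univ, hc]
        rw [Polynomial.degree_lt_iff_coeff_zero] at ih ⊢
        intro m hm
        rw [Polynomial.coeff_mul_X_pow', if_pos (by omega)]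
        exact ih _ (by omega)
      have h1 := Lagrange.coeff_eq_sum hinj hX
      rw [Finset.card_univ, hc] at h1
      have h2 : ∑ i, (eval (t i) (q * X ^ d)) / ∏ j ∈ Finset.univ.erase i, (t i - t j) = 0 := by
        rw [← hu d (by omega)]
        refine Finset.sum_congr rfl fun x _ => ?_
        rw [eval_mul, hev, eval_pow, eval_X]
        have := hw0 x
        change u x * w x * t x ^ d / w x = _
        field_simp
      rw [h2, Polynomial.coeff_mul_X_pow', if_pos (by omega)] at h1
      rw [Polynomial.degree_lt_iff_coeff_zero] at ih ⊢
      intro m hm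
      by_cases hm2 : n + 4 - d ≤ m
      · exact ih m hm2
      · have : m = n + 4 - 1 - d := by omega
        rw [this]; exact h1
  refine ⟨q, ?_, fun x => (hev x).symm⟩
  have := key (n + 1) le_rfl
  have e : n + 4 - (n + 1) = 3 := by omega
  rw [e] at this
  rw [Polynomial.natDegree_le_iff_degree_le]
  exact Order.le_of_lt_succ (by exact_mod_cast this)

open Polynomial in
lemma rigid_core {I : Type} [Fintype I] [DecidableEq I] (n : ℕ) (hc : Fintype.card I = n + 4)
    (t : I → ℂ) (ht : Function.Injective t) (P : I → ℂ[X]) (hP : ∀ x, (P x).natDegree ≤ n)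
    (h0 : ∀ r, ∀ k ≤ n, ∑ x, (P x).coeff r * t x ^ k = 0)
    (h1 : ∀ x, (P x).eval (t x) = 0) (h2 : ∀ x, (P x).derivative.eval (t x) = 0)
    (h3 : (∃ x, P x = 0) ∨ ∀ y, ∃ x, x ≠ y ∧ (P x).eval (t y) = 0) : ∀ x, P x = 0 := by
  choose q hq2 hq using fun r => ker_quad n hc t ht (fun x => (P x).coeff r) (h0 r)
  set w : I → ℂ := fun x => ∏ z ∈ Finset.univ.erase x, (t x - t z) with hw
  have hw0 : ∀ x, w x ≠ 0 := by
    intro x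
    refine Finset.prod_ne_zero_iff.mpr fun z hz => sub_ne_zero.mpr fun h => ?_
    exact (Finset.ne_of_mem_erase hz) (ht h).symm
  let K : ℕ → ℂ[X] := fun i => ∑ r ∈ Finset.range (n + 1), C ((q r).coeff i) * X ^ r
  have hK : ∀ i, (K i).natDegree ≤ n := fun i =>
    Polynomial.natDegree_sum_le_of_forall_le _ _ fun r hr =>
      (Polynomial.natDegree_C_mul_X_pow_le _ _).trans (by have := Finset.mem_range.mp hr; omega)
  have hPK : ∀ x, C (w x) * P x = K 0 + C (t x) * K 1 + C (t x ^ 2) * K 2 := by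
    intro x
    ext r
    simp only [K, coeff_C_mul, coeff_add, finsetSum_coeff, coeff_X_pow, mul_ite, mul_one, mul_zero,
      Finset.sum_ite_eq, Finset.mem_range]
    by_cases hr : r < n + 1
    · simp only [hr, if_true]
      have := hq r x
      rw [Polynomial.eval_eq_sum_range' (n := 3) (by have := hq2 r; omega)] at this
      simp only [Finset.sum_range_succ, Finset.sum_range_zero] at this
      rw [mul_comm, this]; ring
    · rw [Polynomial.coeff_eq_zero_of_natDegree_lt (by have := hP x; omega)]
      simp [hr]
  have e1 : K 0 + X * K 1 + X ^ 2 * K 2 = 0 := by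
    refine Polynomial.eq_zero_of_natDegree_lt_card_of_eval_eq_zero _ ht (fun x => ?_) ?_
    · have := congrArg (Polynomial.eval (t x)) (hPK x)
      simp only [eval_add, eval_mul, eval_C, h1, mul_zero] at this
      simp only [eval_add, eval_mul, eval_X, eval_pow]
      exact this.symm
    · rw [hc]
      have a0 := hK 0
      have a1 := hK 1
      have a2 := hK 2
      have b : (K 0 + X * K 1 + X ^ 2 * K 2).natDegree ≤ n + 2 := by
        refine (natDegree_add_le_of_degree_le (natDegree_add_le_of_degree_le (n := n + 2) (by omega) ?_) ?_)
        · refine natDegree_mul_le.trans ?_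
          rw [natDegree_X]; omega
        · refine natDegree_mul_le.trans ?_
          rw [natDegree_X_pow]; omega
      omega
  have e2 : K 1 + C 2 * X * K 2 = 0 := by
    refine Polynomial.eq_zero_of_natDegree_lt_card_of_eval_eq_zero _ ht (fun x => ?_) ?_
    · have d1 := congrArg (fun p => Polynomial.eval (t x) (derivative p)) (hPK x)
      have d2 := congrArg (fun p => Polynomial.eval (t x) (derivative p)) e1
      simp only [derivative_add, derivative_mul, derivative_C, derivative_X, derivative_X_pow, eval_add, eval_mul, eval_C, eval_X, eval_pow, h2, mul_zero, zero_mul, zero_add, derivative_zero, eval_zero, one_mul] at d1 d2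
      simp only [eval_add, eval_mul, eval_X, eval_C]
      push_cast at d2
      norm_num at d2
      linear_combination d2 + d1
    · rw [hc]
      have a1 := hK 1
      have a2 := hK 2
      have b : (K 1 + C 2 * X * K 2).natDegree ≤ n + 2 := by
        refine (natDegree_add_le_of_degree_le (n := n + 2) (by omega) ?_)
        refine natDegree_mul_le.trans ?_
        have := natDegree_C_mul_le (2 : ℂ) X
        rw [natDegree_X] at this
        omega
      omega
  have e3 : ∀ x, C (w x) * P x = (C (t x) - X) ^ 2 * K 2 := by
    intro x
    rw [hPK x]
    have : C (2 : ℂ) = 2 := rfl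
    rw [this] at e2
    simp only [C_pow]
    linear_combination e1 + (C (t x) - X) * e2
  have e4 : K 2 = 0 := by
    rcases h3 with ⟨x, hx⟩ | h3
    · have := e3 x
      rw [hx, mul_zero] at this
      rcases mul_eq_zero.mp this.symm with h | h
      · exfalso
        have := pow_eq_zero_iff (two_ne_zero) |>.mp h
        have h' := congrArg (fun p => Polynomial.coeff p 1) this
        simp at h'
      · exact h
    · refine Polynomial.eq_zero_of_natDegree_lt_card_of_eval_eq_zero _ ht (fun y => ?_) ?_
      · obtain ⟨x, hxy, hx⟩ := h3 y
        have := congrArg (Polynomial.eval (t y)) (e3 x)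
        simp only [eval_mul, eval_C, hx, mul_zero, eval_pow, eval_sub, eval_X] at this
        rcases mul_eq_zero.mp this.symm with h | h
        · exact absurd (ht (sub_eq_zero.mp (pow_eq_zero_iff (two_ne_zero) |>.mp h))) hxy
        · exact h
      · have := hK 2
        omega
  intro x
  have := e3 x
  rw [e4, mul_zero] at this
  rcases mul_eq_zero.mp this with h | h
  · exact absurd (C_eq_zero.mp h) (hw0 x)
  · exact h

lemma rigid_big (n l : ℕ) (h : 2 * l ≤ n + 4) : ∃ t : Fin l × Fin 2 → ℂ,
    ∀ φ : Fin l → Fin 2 → Fin (n + 1) → ℂ,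
      (∀ r k : Fin (n + 1), ∑ j, ∑ c, φ j c r * t (j, c) ^ (k : ℕ) = 0) →
      (∀ j c, ∑ r : Fin (n + 1), φ j c r * ((r : ℕ) * t (j, c) ^ ((r : ℕ) - 1)) = 0) →
      (∀ j c a, ∑ r : Fin (n + 1), φ j c r * t (j, a) ^ (r : ℕ) = 0) → φ = 0 := by
  let tN : (Fin l × Fin 2) ⊕ Fin (n + 4 - 2 * l) → ℕ :=
    Sum.elim (fun x => 2 * x.1.1 + x.2.1) (fun i => 2 * l + i.1)
  have htN : Function.Injective tN := by
    rintro (⟨j, c⟩ | i) (⟨j', c'⟩ | i') hh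
    · simp only [tN, Sum.elim_inl] at hh
      have h1 : j = j' := Fin.ext (by omega)
      have h2 : c = c' := Fin.ext (by omega)
      rw [h1, h2]
    · simp only [tN, Sum.elim_inl, Sum.elim_inr] at hh
      omega
    · simp only [tN, Sum.elim_inl, Sum.elim_inr] at hh
      omega
    · simp only [tN, Sum.elim_inr] at hh
      have h1 : i = i' := Fin.ext (by omega)
      rw [h1]
  let t : (Fin l × Fin 2) ⊕ Fin (n + 4 - 2 * l) → ℂ := fun x => (tN x : ℂ)
  have ht : Function.Injective t := fun x y hxy => htN (Nat.cast_injective (R := ℂ) hxy)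
  refine ⟨fun x => t (Sum.inl x), fun φ H0 H1 H2 => ?_⟩
  let P : (Fin l × Fin 2) ⊕ Fin (n + 4 - 2 * l) → Polynomial ℂ :=
    Sum.elim (fun x => ∑ r : Fin (n + 1), Polynomial.C (φ x.1 x.2 r) * Polynomial.X ^ (r : ℕ)) 0
  have hdeg : ∀ x, (P x).natDegree ≤ n := by
    rintro (x | x)
    · exact Polynomial.natDegree_sum_le_of_forall_le _ _ fun r _ =>
        (Polynomial.natDegree_C_mul_X_pow_le _ _).trans (by omega)
    · simp [P]
  have hco : ∀ x (r : Fin (n + 1)), (P (Sum.inl x)).coeff r = φ x.1 x.2 r := by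
    intro x r
    simp only [P, Sum.elim_inl, Polynomial.finsetSum_coeff, Polynomial.coeff_C_mul, Polynomial.coeff_X_pow]
    rw [Finset.sum_eq_single r]
    · simp
    · intro b _ hb
      rw [if_neg (fun hh => hb (Fin.ext hh.symm)), mul_zero]
    · simp
  have hall := rigid_core n (by simp; omega) t ht P hdeg ?_ ?_ ?_ ?_
  · ext j c r
    have := hco (j, c) r
    rw [hall] at this
    simpa using this.symm
  · intro r k hk
    rw [Fintype.sum_sum_type]
    by_cases hr : r < n + 1
    · have h1 := H0 ⟨r, hr⟩ ⟨k, by omega⟩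
      have h2 : ∀ x, (P (Sum.inl x)).coeff r = φ x.1 x.2 ⟨r, hr⟩ := fun x => hco x ⟨r, hr⟩
      simp only [h2]
      rw [Fintype.sum_prod_type]
      simpa [P] using h1
    · rw [Finset.sum_eq_zero, Finset.sum_eq_zero, add_zero]
      · intro x _
        simp [P]
      · intro x _
        rw [Polynomial.coeff_eq_zero_of_natDegree_lt, zero_mul]
        have := hdeg (Sum.inl x)
        omega
  · rintro (x | x)
    · have := H2 x.1 x.2 x.2
      simpa [P, Polynomial.eval_finsetSum] using this
    · simp [P]
  · rintro (x | x)
    · have := H1 x.1 x.2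
      simpa [P, Polynomial.eval_finsetSum, Polynomial.derivative_X_pow] using this
    · simp [P]
  · by_cases hm : n + 4 - 2 * l = 0
    · right
      rintro (⟨j, c⟩ | x)
      · refine ⟨Sum.inl (j, c + 1), ?_, ?_⟩
        · intro hh
          have := (Prod.mk.inj (Sum.inl.inj hh)).2
          fin_cases c <;> simp at this
        · have := H2 j (c + 1) c
          simpa [P, Polynomial.eval_finsetSum] using this
      · have := x.2
        omega
    · left
      exact ⟨Sum.inr ⟨0, by omega⟩, rfl⟩


/-- explicit points on the twisted cubic -/
def T6 : Fin 6 → Fin 2 → ℂ := ![![-1, 2], ![-2, 0], ![-2, -1], ![0, 3], ![1, 2], ![1, 3]]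

lemma T6_ne (j : Fin 6) (c : Fin 2) : T6 j c ≠ T6 j (c + 1) := by
  have e : (1 + 1 : Fin 2) = 0 := rfl
  fin_cases j <;> fin_cases c <;> norm_num [T6, e]

lemma lin6 (c : Fin 6 → Fin 2 → ℂ)
    (h : ∀ i ≤ 5, ∀ m ≤ 1, ∑ j, ∑ a, c j a * (T6 j a ^ i * T6 j (a + 1) ^ m) = 0) : c = 0 := by
  have s00 := h 0 (by norm_num) 0 (by norm_num)
  have s01 := h 1 (by norm_num) 0 (by norm_num)
  have s02 := h 2 (by norm_num) 0 (by norm_num)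
  have s03 := h 3 (by norm_num) 0 (by norm_num)
  have s04 := h 4 (by norm_num) 0 (by norm_num)
  have s05 := h 5 (by norm_num) 0 (by norm_num)
  have s10 := h 0 (by norm_num) 1 (by norm_num)
  have s11 := h 1 (by norm_num) 1 (by norm_num)
  have s12 := h 2 (by norm_num) 1 (by norm_num)
  have s13 := h 3 (by norm_num) 1 (by norm_num)
  have s14 := h 4 (by norm_num) 1 (by norm_num)
  have s15 := h 5 (by norm_num) 1 (by norm_num)
  simp [T6, Fin.sum_univ_succ] at s00 s01 s02 s03 s04 s05 s10 s11 s12 s13 s14 s15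
  norm_num [Fin.succ] at s00 s01 s02 s03 s04 s05 s10 s11 s12 s13 s14 s15
  ext j a
  fin_cases j <;> fin_cases a
  · change c 0 0 = 0
    linear_combination (-1/4) * s01 + (1/3) * s02 + (-1/48) * s03 + (-1/12) * s04 + (1/48) * s05 + (-1/8) * s11 + (1/6) * s12 + (-1/96) * s13 + (-1/24) * s14 + (1/96) * s15
  · change c 0 1 = 0
    linear_combination (-1/8) * s01 + (-1/48) * s02 + (7/48) * s03 + (1/48) * s04 + (-1/48) * s05 + (1/8) * s11 + (1/48) * s12 + (-7/48) * s13 + (-1/48) * s14 + (1/48) * s15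
  · change c 1 0 = 0
    linear_combination (1/20) * s01 + (-1/24) * s02 + (-1/24) * s03 + (1/24) * s04 + (-1/120) * s05 + (1/20) * s11 + (-1/24) * s12 + (-1/24) * s13 + (1/24) * s14 + (-1/120) * s15
  · change c 1 1 = 0
    linear_combination (3/5) * s00 + (-1/5) * s01 + (-3/4) * s02 + (1/4) * s03 + (3/20) * s04 + (-1/20) * s05 + (-1/5) * s10 + (1/15) * s11 + (1/4) * s12 + (-1/12) * s13 + (-1/20) * s14 + (1/60) * s15
  · change c 2 0 = 0
    linear_combination (-1/20) * s11 + (1/24) * s12 + (1/24) * s13 + (-1/24) * s14 + (1/120) * s15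
  · change c 2 1 = 0
    linear_combination (-1/4) * s01 + (1/3) * s02 + (-1/48) * s03 + (-1/12) * s04 + (1/48) * s05 + (1/8) * s11 + (-1/6) * s12 + (1/96) * s13 + (1/24) * s14 + (-1/96) * s15
  · change c 3 0 = 0
    linear_combination (2/5) * s00 + (-2/15) * s01 + (-1/2) * s02 + (1/6) * s03 + (1/10) * s04 + (-1/30) * s05 + (1/5) * s10 + (-1/15) * s11 + (-1/4) * s12 + (1/12) * s13 + (1/20) * s14 + (-1/60) * s15
  · change c 3 1 = 0
    linear_combination (1/30) * s01 + (-1/24) * s03 + (1/120) * s05 + (-1/30) * s11 + (1/24) * s13 + (-1/120) * s15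
  · change c 4 0 = 0
    linear_combination (3) * s01 + (2) * s02 + (-7/4) * s03 + (-1/2) * s04 + (1/4) * s05 + (-1) * s11 + (-2/3) * s12 + (7/12) * s13 + (1/6) * s14 + (-1/12) * s15
  · change c 4 1 = 0
    linear_combination (-1/8) * s01 + (-1/48) * s02 + (7/48) * s03 + (1/48) * s04 + (-1/48) * s05 + (-1/8) * s11 + (-1/48) * s12 + (7/48) * s13 + (1/48) * s14 + (-1/48) * s15
  · change c 5 0 = 0
    linear_combination (-2) * s01 + (-4/3) * s02 + (7/6) * s03 + (1/3) * s04 + (-1/6) * s05 + (1) * s11 + (2/3) * s12 + (-7/12) * s13 + (-1/6) * s14 + (1/12) * s15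
  · change c 5 1 = 0
    linear_combination (1/30) * s11 + (-1/24) * s13 + (1/120) * s15

lemma rigid_three (l : ℕ) (h : l ≤ 6) : ∃ t : Fin l × Fin 2 → ℂ,
    ∀ φ : Fin l → Fin 2 → Fin (3 + 1) → ℂ,
      (∀ r k : Fin (3 + 1), ∑ j, ∑ c, φ j c r * t (j, c) ^ (k : ℕ) = 0) →
      (∀ j c, ∑ r : Fin (3 + 1), φ j c r * ((r : ℕ) * t (j, c) ^ ((r : ℕ) - 1)) = 0) →
      (∀ j c a, ∑ r : Fin (3 + 1), φ j c r * t (j, a) ^ (r : ℕ) = 0) → φ = 0 := by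
  refine ⟨fun x => T6 (Fin.castLE h x.1) x.2, fun φ H0 H1 H2 => ?_⟩
  have hform : ∀ j c, φ j c 2 = - φ j c 3 * (2 * T6 (Fin.castLE h j) c + T6 (Fin.castLE h j) (c + 1)) ∧
      φ j c 1 = φ j c 3 * (T6 (Fin.castLE h j) c ^ 2 + 2 * T6 (Fin.castLE h j) c * T6 (Fin.castLE h j) (c + 1)) ∧
      φ j c 0 = - φ j c 3 * (T6 (Fin.castLE h j) c ^ 2 * T6 (Fin.castLE h j) (c + 1)) := by
    intro j c
    have a1 := H1 j c
    have a2 := H2 j c c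
    have a3 := H2 j c (c + 1)
    have hne := sub_ne_zero.mpr (T6_ne (Fin.castLE h j) c)
    have E : ∀ f : Fin (3 + 1) → ℂ, ∑ r, f r = f 0 + f 1 + f 2 + f 3 := fun f => Fin.sum_univ_four f
    rw [E] at a1 a2 a3
    simp only [Fin.val_zero, Fin.val_one, Fin.val_two, pow_zero, pow_one,
      Nat.cast_zero, zero_mul, mul_zero, Nat.cast_one, mul_one, Nat.sub_self, zero_add] at a1 a2 a3
    have v3 : ((3 : Fin (3 + 1)) : ℕ) = 3 := rfl
    simp only [v3] at a1 a2 a3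
    push_cast at a1
    norm_num at a1
    generalize T6 (Fin.castLE h j) c = p at a1 a2 a3 hne ⊢
    generalize T6 (Fin.castLE h j) (c + 1) = q at a1 a2 a3 hne ⊢
    have k2 : φ j c 2 = - φ j c 3 * (2 * p + q) := by
      have : (p - q) ^ 2 * (φ j c 2 + φ j c 3 * (2 * p + q)) = 0 := by
        linear_combination (p - q) * a1 - a2 + a3
      rcases mul_eq_zero.mp this with h' | h'
      · exact absurd h' (pow_ne_zero 2 hne)
      · linear_combination h'
    have k1 : φ j c 1 = φ j c 3 * (p ^ 2 + 2 * p * q) := by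
      linear_combination a1 - 2 * p * k2
    refine ⟨k2, k1, ?_⟩
    linear_combination a2 - p * k1 - p ^ 2 * k2
  let cc : Fin 6 → Fin 2 → ℂ := fun j a => if hj : j.1 < l then φ ⟨j, hj⟩ a 3 else 0
  have hsum : ∀ i m, ∑ j, ∑ a, cc j a * (T6 j a ^ i * T6 j (a + 1) ^ m) =
      ∑ j, ∑ a, φ j a 3 * (T6 (Fin.castLE h j) a ^ i * T6 (Fin.castLE h j) (a + 1) ^ m) := by
    intro i m
    symm
    refine Fintype.sum_of_injective (Fin.castLE h) (Fin.castLE_injective h) _ _ ?_ ?_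
    · intro j hj
      have : ¬ j.1 < l := fun hh => hj ⟨⟨j, hh⟩, rfl⟩
      simp [cc, this]
    · intro j
      simp [cc]
  let s : ℕ → ℕ → ℂ := fun i m => ∑ j, ∑ a, φ j a 3 * (T6 (Fin.castLE h j) a ^ i * T6 (Fin.castLE h j) (a + 1) ^ m)
  have r3 : ∀ k : Fin 4, s k 0 = 0 := by
    intro k
    rw [← H0 3 k]
    simp [s]
  have r2 : ∀ k : Fin 4, 2 * s (k + 1) 0 + s k 1 = 0 := by
    intro k
    rw [← neg_eq_zero, ← H0 2 k]
    simp only [s, Finset.mul_sum, ← Finset.sum_add_distrib, ← Finset.sum_neg_distrib]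
    refine Finset.sum_congr rfl fun j _ => Finset.sum_congr rfl fun a _ => ?_
    rw [(hform j a).1]
    ring
  have r1 : ∀ k : Fin 4, s (k + 2) 0 + 2 * s (k + 1) 1 = 0 := by
    intro k
    rw [← H0 1 k]
    simp only [s, Finset.mul_sum, ← Finset.sum_add_distrib]
    refine Finset.sum_congr rfl fun j _ => Finset.sum_congr rfl fun a _ => ?_
    rw [(hform j a).2.1]
    ring
  have r0 : ∀ k : Fin 4, s (k + 2) 1 = 0 := by
    intro k
    rw [← neg_eq_zero, ← H0 0 k]
    simp only [s, ← Finset.sum_neg_distrib]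
    refine Finset.sum_congr rfl fun j _ => Finset.sum_congr rfl fun a _ => ?_
    rw [(hform j a).2.2]
    ring
  have s00 : s 0 0 = 0 := r3 0
  have s10 : s 1 0 = 0 := r3 1
  have s20 : s 2 0 = 0 := r3 2
  have s30 : s 3 0 = 0 := r3 3
  have s21 : s 2 1 = 0 := r0 0
  have s31 : s 3 1 = 0 := r0 1
  have s41 : s 4 1 = 0 := r0 2
  have s51 : s 5 1 = 0 := r0 3
  have q20 : 2 * s 1 0 + s 0 1 = 0 := r2 0
  have q21 : 2 * s 2 0 + s 1 1 = 0 := r2 1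
  have q23 : 2 * s 4 0 + s 3 1 = 0 := r2 3
  have q13 : s 5 0 + 2 * s 4 1 = 0 := r1 3
  have s01 : s 0 1 = 0 := by linear_combination q20 - 2 * s10
  have s11 : s 1 1 = 0 := by linear_combination q21 - 2 * s20
  have s40 : s 4 0 = 0 := by linear_combination (1 / 2) * q23 - (1 / 2) * s31
  have s50 : s 5 0 = 0 := by linear_combination q13 - 2 * s41
  have hcc : cc = 0 := by
    apply lin6
    intro i hi m hm
    rw [hsum]
    change s i m = 0
    interval_cases m <;> interval_cases i <;> assumption
  have h3 : ∀ j c, φ j c 3 = 0 := by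
    intro j c
    have := congrFun (congrFun hcc (Fin.castLE h j)) c
    simpa [cc] using this
  ext j c r
  have hf := hform j c
  rw [h3] at hf
  fin_cases r
  · simpa using hf.2.2
  · simpa using hf.2.1
  · simpa using hf.1
  · exact h3 j c

/-- Configurations of `l` generic lines in `ℙⁿ`: feasibility and non-feasibility cases.
`⌊n/2⌋` is the natural-number division `n / 2`. -/
theorem lines_configurations (n l : ℕ) (hn : 3 ≤ n)
    (L : Fin (n - 1) → ℕ) (hL : L = fun j => if j.1 = 1 then l else 0) :
    (((n = 3 ∧ l ≤ 6) ∨ (3 < n ∧ l ≤ n / 2 + 2)) → Feasible n L) ∧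
    (((n = 3 ∧ 7 ≤ l) ∨ (n = 5 ∧ 6 ≤ l) ∨ (n = 7 ∧ 7 ≤ l) ∨
        (3 < n ∧ n ≠ 5 ∧ n ≠ 7 ∧ n / 2 + 3 ≤ l)) → NonFeasible n L) := by
  have h0 : ∀ i, i.1 ≠ 1 → L i = 0 := by
    intro i hi
    rw [hL]
    simp [hi]
  have h1 : L ⟨1, by omega⟩ = l := by
    rw [hL]
    simp
  constructor
  · intro h
    refine gen_bridge n hn L _ (GoodL n _) (fun A hA => (good_iff n hn L h0 A).mpr hA) ?_
    rw [h1]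
    rcases h with ⟨rfl, h⟩ | ⟨h, h'⟩
    · obtain ⟨t, ht⟩ := rigid_three l h
      exact feas_of_rigid 3 l (by norm_num) t ht
    · obtain ⟨t, ht⟩ := rigid_big n l (by omega)
      exact feas_of_rigid n l (by omega) t ht
  · intro h
    refine gen_bridge n hn L _ (fun B => ¬ GoodL n _ B) (fun A hA hc => hA ((good_iff n hn L h0 A).mp hc)) ?_
    rw [h1]
    by_cases h4 : n = 4
    · subst h4
      exact nonfeas_four l (by omega)
    · obtain ⟨m, rfl⟩ : ∃ m, l = m + 2 := ⟨l - 2, by omega⟩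
      refine nonfeas_dim n m ?_
      rcases h with ⟨rfl, h⟩ | ⟨rfl, h⟩ | ⟨rfl, h⟩ | ⟨h3, h5, h7, h⟩
      · omega
      · omega
      · omega
      · obtain ⟨e, he⟩ : ∃ e, m = n / 2 + 1 + e := ⟨m - (n / 2 + 1), by omega⟩
        rcases Nat.even_or_odd' n with ⟨k, rfl | rfl⟩
        · have e1 : 2 * k / 2 = k := by omega
          have hk : 3 ≤ k := by omega
          subst he
          rw [e1]
          nlinarith
        · have e1 : (2 * k + 1) / 2 = k := by omega
          have hk : 4 ≤ k := by omega
          subst he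
          rw [e1]
          nlinarith

end
end

section
/- Let n ≥ 3 and consider the weight vector L = (1,1,…,1) in ℙⁿ, i.e., a configuration consisting of exactly one generic linear subspace of each dimension i for 0 ≤ i ≤ n−2. Then L is feasible for 3 ≤ n ≤ 5, and L is non-feasible for n ≥ 8. -/
noncomputable section

lemma veron_indep_sq (n : ℕ) (v : Fin (n + 1) → Fin 2 → ℂ)
    (h : ∀ i j, i ≠ j → v i 0 * v j 1 ≠ v j 0 * v i 1) :
    LinearIndependent ℂ (fun i => veron n (v i)) := by
  have hdet : (Matrix.projVandermonde (fun i => v i 0) (fun i => v i 1)).det ≠ 0 := by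
    rw [Matrix.det_projVandermonde]
    refine Finset.prod_ne_zero_iff.2 fun i _ => Finset.prod_ne_zero_iff.2 fun j hj => ?_
    rw [Finset.mem_Ioi] at hj
    exact sub_ne_zero.2 (h j i hj.ne')
  have := Matrix.linearIndependent_rows_of_det_ne_zero hdet
  have heq : (fun i => veron n (v i)) =
      fun i => Matrix.projVandermonde (fun i => v i 0) (fun i => v i 1) i := by
    ext i k
    simp [veron, Matrix.projVandermonde_apply, Fin.val_rev]
  rw [heq]
  exact this

lemma veron_indep_aux (n d : ℕ) : ∀ (m : ℕ) (_ : m + d = n + 1) (v : Fin m → Fin 2 → ℂ)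
    (_ : ∀ i, v i ≠ 0) (_ : ∀ i j, i ≠ j → v i 0 * v j 1 ≠ v j 0 * v i 1),
    LinearIndependent ℂ (fun i => veron n (v i)) := by
  induction d with
  | zero =>
    intro m hm v _ h
    obtain rfl : m = n + 1 := hm
    exact veron_indep_sq n v h
  | succ d ih =>
    intro m hm v h0 h
    obtain ⟨t, ht⟩ := Infinite.exists_notMem_finset
      (Finset.univ.image fun j => v j 0 / v j 1)
    have ht' : ∀ j, t * v j 1 ≠ v j 0 * 1 := by
      intro j hj
      by_cases h1 : v j 1 = 0
      · apply h0 j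
        ext k
        fin_cases k
        · simpa [h1] using hj.symm
        · simpa using h1
      · apply ht
        simp only [Finset.mem_image, Finset.mem_univ, true_and]
        exact ⟨j, by rw [div_eq_iff h1]; simpa using hj.symm⟩
    have := ih (m + 1) (by omega) (Fin.cons ![t, 1] v)
      (by
        intro i
        refine Fin.cases ?_ (fun i => ?_) i
        · intro h; simpa using congrFun h 1
        · simpa using h0 i)
      (by
        intro i j
        refine Fin.cases ?_ (fun i => ?_) i <;> refine Fin.cases ?_ (fun j => ?_) j
        · simp
        · intro _; simpa using ht' j
        · intro _; simpa using (ht' i).symm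
        · intro hij; simpa using h i j (by simpa using hij))
    have := this.comp Fin.succ (Fin.succ_injective m)
    simpa [Function.comp_def] using this

lemma veron_indep {ι : Type*} [Fintype ι] (n : ℕ) (hc : Fintype.card ι ≤ n + 1)
    (v : ι → Fin 2 → ℂ) (h0 : ∀ i, v i ≠ 0)
    (h : ∀ i j, i ≠ j → v i 0 * v j 1 ≠ v j 0 * v i 1) :
    LinearIndependent ℂ (fun i => veron n (v i)) := by
  have := veron_indep_aux n (n + 1 - Fintype.card ι) (Fintype.card ι) (by omega)
    (v ∘ (Fintype.equivFin ι).symm) (fun i => h0 _)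
    (fun i j hij => h _ _ (by simpa using hij))
  have := this.comp (Fintype.equivFin ι) (Equiv.injective _)
  simpa [Function.comp_def] using this

lemma cross_prop {v w : Fin 2 → ℂ} (hv : v ≠ 0) (hw : w ≠ 0)
    (h : v 0 * w 1 = w 0 * v 1) : ∃ c : ℂ, c ≠ 0 ∧ w = c • v := by
  by_cases h1 : v 1 = 0
  · have h0 : v 0 ≠ 0 := by
      intro h0; apply hv; ext k; fin_cases k <;> simpa
    have hw1 : w 1 = 0 := by
      rw [h1, mul_zero] at h; exact (mul_eq_zero.1 h).resolve_left h0
    have hw0 : w 0 ≠ 0 := by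
      intro h0; apply hw; ext k; fin_cases k <;> simpa
    refine ⟨w 0 / v 0, div_ne_zero hw0 h0, ?_⟩
    ext k; fin_cases k
    · simp [h0]
    · simp [h1, hw1]
  · have hw1 : w 1 ≠ 0 := by
      intro hw1
      rw [hw1, mul_zero] at h
      have hw0 := (mul_eq_zero.1 h.symm).resolve_right h1
      apply hw; ext k; fin_cases k <;> simpa
    refine ⟨w 1 / v 1, div_ne_zero hw1 h1, ?_⟩
    ext k; fin_cases k
    · simp; field_simp; linear_combination -h
    · simp [h1]

lemma span_eq_of_indep {V : Type*} [AddCommGroup V] [Module ℂ V] {ι : Type*} [Fintype ι]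
    {u w : ι → V} (hu : LinearIndependent ℂ u)
    (h : ∀ i, u i ∈ Submodule.span ℂ (Set.range w)) :
    Submodule.span ℂ (Set.range u) = Submodule.span ℂ (Set.range w) := by
  have hfin : FiniteDimensional ℂ (Submodule.span ℂ (Set.range w)) :=
    FiniteDimensional.span_of_finite ℂ (Set.finite_range w)
  apply Submodule.eq_of_le_of_finrank_le
  · rw [Submodule.span_le]
    rintro _ ⟨i, rfl⟩
    exact h i
  · rw [finrank_span_eq_card hu]
    exact finrank_range_le_card w

lemma exists_rel {σ τ : Type} [Fintype σ] [Fintype τ] (h : Fintype.card τ < Fintype.card σ)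
    (Φ : σ → MvPolynomial τ ℂ) : ∃ F : MvPolynomial σ ℂ, F ≠ 0 ∧
      ∀ p : τ → ℂ, MvPolynomial.eval (fun s => MvPolynomial.eval p (Φ s)) F = 0 := by
  have hn : ¬ AlgebraicIndependent ℂ Φ := by
    intro hi
    have := hi.cardinalMk_le_trdeg
    rw [MvPolynomial.trdeg_of_isDomain] at this
    simp at this
    omega
  rw [algebraicIndependent_iff] at hn
  push Not at hn
  obtain ⟨F, h1, h2⟩ := hn
  refine ⟨F, h2, fun p => ?_⟩
  have := congrArg (MvPolynomial.eval p) h1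
  rw [map_zero] at this
  rw [← this, MvPolynomial.aeval_def, MvPolynomial.hom_eval₂, MvPolynomial.eval,
    MvPolynomial.coe_eval₂Hom]
  congr 1
  ext x
  simp [MvPolynomial.algebraMap_eq]

/-- index set of the intersection points -/
abbrev Pt (n : ℕ) := (i : Fin (n - 1)) × Fin (i.1 + 1)

/-- parameters -/
abbrev Par (n : ℕ) := (Fin (n + 1) × Fin (n + 1)) ⊕ (Pt n ⊕
  ((i : Fin (n - 1)) × (Fin (i.1 + 1) × Fin (i.1 + 1))))

lemma sums_lt (m : ℕ) (hm : 7 ≤ m) : (m + 2) * (m + 2) +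
    (∑ i ∈ Finset.range m, (i + 1) + ∑ i ∈ Finset.range m, (i + 1) * (i + 1)) <
      ∑ i ∈ Finset.range m, (m + 2) * (i + 1) := by
  rw [← Finset.mul_sum]
  have h1 : ∀ m, 2 * ∑ i ∈ Finset.range m, (i + 1) = m * (m + 1) := by
    intro m
    induction m with
    | zero => simp
    | succ k ih => rw [Finset.sum_range_succ, mul_add, ih]; ring
  have h2 : ∀ m, 6 * ∑ i ∈ Finset.range m, (i + 1) * (i + 1) = m * (m + 1) * (2 * m + 1) := by
    intro m
    induction m with
    | zero => simp
    | succ k ih => rw [Finset.sum_range_succ, mul_add, ih]; ring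
  have a := h1 m
  have b := h2 m
  obtain ⟨k, rfl⟩ := Nat.exists_eq_add_of_le hm
  set S := ∑ i ∈ Finset.range (7 + k), (i + 1)
  set T := ∑ i ∈ Finset.range (7 + k), (i + 1) * (i + 1)
  have e : 6 * ((7 + k + 2) * S) = 3 * (7 + k + 2) * ((7 + k) * (7 + k + 1)) := by
    rw [← a]; ring
  have : 6 * ((7 + k + 2) * (7 + k + 2) + (S + T)) < 6 * ((7 + k + 2) * S) := by
    rw [e, mul_add 6 _ (S + T), mul_add 6 S T, b, show 6 * S = 3 * (2 * S) by ring, a]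
    have : 3 * (7 + k + 2) * ((7 + k) * (7 + k + 1)) =
      6 * ((7 + k + 2) * (7 + k + 2)) + (3 * ((7 + k) * (7 + k + 1)) +
      (7 + k) * (7 + k + 1) * (2 * (7 + k) + 1)) + (k^3 + 18 * k ^ 2 + 83 * k + 18) := by
      ring
    omega
  omega

lemma card_lt (n : ℕ) (hn : 8 ≤ n) : Fintype.card (Par n) < Fintype.card
    ((i : Fin (n - 1)) × (Fin 1 × Fin (n + 1) × Fin (i.1 + 1))) := by
  obtain ⟨m, rfl⟩ : ∃ m, n = m + 1 := ⟨n - 1, by omega⟩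
  have := sums_lt m (by omega)
  simp only [Par, Pt, Fintype.card_sum, Fintype.card_sigma, Fintype.card_prod, Fintype.card_fin,
    one_mul]
  rw [← Finset.sum_range (n := m + 1 - 1) (fun i => i + 1),
    ← Finset.sum_range (n := m + 1 - 1) (fun i => (i + 1) * (i + 1)),
    ← Finset.sum_range (n := m + 1 - 1) (fun i => (m + 1 + 1) * (i + 1))]
  exact this

/-- the polynomial parametrization of maximally intersected configurations -/
def Phi (n : ℕ) (ε : Pt n → Bool)
    (s : (i : Fin (n - 1)) × (Fin 1 × Fin (n + 1) × Fin (i.1 + 1))) : MvPolynomial (Par n) ℂ :=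
  ∑ l : Fin (s.1.1 + 1), (∑ m : Fin (n + 1), MvPolynomial.X (Sum.inl (s.2.2.1, m)) *
    (MvPolynomial.X (Sum.inr (Sum.inl ⟨s.1, l⟩)) ^ m.1 *
      MvPolynomial.C (if ε ⟨s.1, l⟩ then 1 else 0) ^ (n - m.1))) *
      MvPolynomial.X (Sum.inr (Sum.inr ⟨s.1, l, s.2.2.2⟩))

lemma normalize_pt {v : Fin 2 → ℂ} (hv : v ≠ 0) : ∃ (b : Bool) (t c : ℂ), c ≠ 0 ∧
    v = c • ![t, if b then 1 else 0] := by
  by_cases h : v 1 = 0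
  · refine ⟨false, 1, v 0, ?_, ?_⟩
    · intro h0; apply hv; ext k; fin_cases k <;> simpa
    · ext k; fin_cases k <;> simp [h]
  · refine ⟨true, v 0 / v 1, v 1, h, ?_⟩
    ext k; fin_cases k
    · simp; field_simp
    · simp

lemma maxint_one {n : ℕ} {M : Matrix (Fin (n + 1)) (Fin (n + 1)) ℂ} (hM : IsUnit M.det)
    {i : ℕ} (hi : i < n - 1) (A : Matrix (Fin (n + 1)) (Fin (i + 1)) ℂ)
    (h : ({P : PP n | ∃ v : Fin 2 → ℂ, v ≠ 0 ∧ ∃ c : ℂ, c ≠ 0 ∧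
      P.rep = c • M.mulVec (veron n v)} ∩ projSet A).ncard = i + 1) :
    ∃ (ε : Fin (i + 1) → Bool) (t : Fin (i + 1) → ℂ) (B : Fin (i + 1) → Fin (i + 1) → ℂ),
      ∀ r k, A r k = ∑ l, M.mulVec (veron n ![t l, if ε l then 1 else 0]) r * B l k := by
  set S := {P : PP n | ∃ v : Fin 2 → ℂ, v ≠ 0 ∧ ∃ c : ℂ, c ≠ 0 ∧
      P.rep = c • M.mulVec (veron n v)} ∩ projSet A with hS
  have hfin : Finite S := Set.finite_of_ncard_ne_zero (by omega)
  have e : Fin (i + 1) ≃ S := (Finite.equivFinOfCardEq (by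
    rw [Nat.card_coe_set_eq]; exact h)).symm
  have key : ∀ l : Fin (i + 1), ∃ (b : Bool) (t c : ℂ), c ≠ 0 ∧ ![t, if b then (1:ℂ) else 0] ≠ 0 ∧
      (e l).1.rep = c • M.mulVec (veron n ![t, if b then 1 else 0]) := by
    intro l
    obtain ⟨⟨v, hv, c, hc, hP⟩, -⟩ := (e l).2
    obtain ⟨b, t, d, hd, rfl⟩ := normalize_pt hv
    refine ⟨b, t, c * d ^ n, mul_ne_zero hc (pow_ne_zero _ hd), (smul_ne_zero_iff.1 hv).2, ?_⟩
    rw [hP, veron_smul, Matrix.mulVec_smul, smul_smul]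
  choose ε t c hc hv hrep using key
  have hMi : Function.Injective M.mulVecLin :=
    Matrix.mulVec_injective_of_isUnit ((Matrix.isUnit_iff_isUnit_det M).2 hM)
  have hind : LinearIndependent ℂ
      (fun l => M.mulVec (veron n ![t l, if ε l then 1 else 0])) := by
    have : LinearIndependent ℂ (fun l => veron n ![t l, if ε l then 1 else 0]) := by
      apply veron_indep
      · simp; omega
      · exact hv
      · intro l l' hll hcr
        obtain ⟨d, hd, hd'⟩ := cross_prop (hv l) (hv l') hcr
        apply hll
        apply e.injective
        apply Subtype.ext
        rw [← Projectivization.mk_rep (e l).1, ← Projectivization.mk_rep (e l').1,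
          Projectivization.mk_eq_mk_iff']
        refine ⟨c l * (c l' * d ^ n)⁻¹, ?_⟩
        rw [hrep, hrep, hd', veron_smul, Matrix.mulVec_smul, smul_smul, smul_smul]
        congr 1
        have := hc l'
        field_simp
    exact this.map' M.mulVecLin (LinearMap.ker_eq_bot.2 hMi)
  have hspan := span_eq_of_indep (w := fun j => fun r => A r j) hind (by
    intro l
    have := (e l).2.2
    simp only [projSet, Set.mem_ofPred_eq] at this
    rw [hrep] at this
    exact (Submodule.smul_mem_iff _ (hc l)).1 this)
  have hB : ∀ k, ∃ B : Fin (i + 1) → ℂ,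
      ∑ l, B l • M.mulVec (veron n ![t l, if ε l then 1 else 0]) = fun r => A r k := by
    intro k
    rw [← Submodule.mem_span_range_iff_exists_fun, hspan]
    exact Submodule.subset_span ⟨k, rfl⟩
  choose B hB using hB
  refine ⟨ε, t, fun l k => B k l, fun r k => ?_⟩
  have := congrFun (hB k) r
  simp only [Finset.sum_apply, Pi.smul_apply, smul_eq_mul] at this
  rw [← this]
  exact Finset.sum_congr rfl fun l _ => mul_comm _ _

lemma nonfeasible (n : ℕ) (hn : 8 ≤ n) : NonFeasible n fun _ => 1 := by
  have h := fun ε => exists_rel (card_lt n hn) (Phi n ε)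
  choose F hF0 hF using h
  refine ⟨∏ ε, F ε, Finset.prod_ne_zero_iff.2 fun ε _ => hF0 ε, ?_⟩
  rintro A - hA ⟨C, ⟨M, hM, rfl⟩, hC⟩
  apply hA
  rw [map_prod, Finset.prod_eq_zero_iff]
  choose ε t B hAB using fun i : Fin (n - 1) => maxint_one hM i.2 (A i 0) (hC i 0)
  refine ⟨fun p => ε p.1 p.2, Finset.mem_univ _, ?_⟩
  rw [← hF (fun p => ε p.1 p.2) (Sum.elim (fun q => M q.1 q.2)
    (Sum.elim (fun p => t p.1 p.2) (fun p => B p.1 p.2.1 p.2.2)))]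
  congr 2
  ext ⟨i, j, r, k⟩
  obtain rfl : j = 0 := Subsingleton.elim _ _
  simp only [hAB i r k, Phi, map_sum, map_mul, map_pow, MvPolynomial.eval_X, MvPolynomial.eval_C,
    Sum.elim_inl, Sum.elim_inr]
  refine Finset.sum_congr rfl fun l _ => ?_
  simp [Matrix.mulVec, dotProduct, veron]

/-- distinct parameters -/
def ptv (n : ℕ) (x : Option (Pt n)) : Fin 2 → ℂ := ![(Encodable.encode x : ℕ), 1]

lemma ptv_ne (n : ℕ) (x : Option (Pt n)) : ptv n x ≠ 0 := by
  intro h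
  simpa [ptv] using congrFun h 1

lemma ptv_cross (n : ℕ) (x y : Option (Pt n)) (h : x ≠ y) :
    ptv n x 0 * ptv n y 1 ≠ ptv n y 0 * ptv n x 1 := by
  simpa [ptv] using h

/-- all columns of the configuration and one more vector -/
def cols {n : ℕ} (A : Config n fun _ => 1) : Option (Pt n) → Fin (n + 1) → ℂ
  | none => veron n (ptv n none)
  | some p => fun r => A p.1 0 r p.2

/-- general position -/
def GP {n : ℕ} (A : Config n fun _ => 1) : Prop :=
  ∀ e : Fin (n + 1) → Option (Pt n), Function.Injective e → LinearIndependent ℂ (cols A ∘ e)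

/-- the model configuration -/
def V0 (n : ℕ) : Config n fun _ => 1 := fun i _ r k => veron n (ptv n (some ⟨i, k⟩)) r

lemma cols_V0 (n : ℕ) (x : Option (Pt n)) : cols (V0 n) x = veron n (ptv n x) := by
  cases x <;> rfl

lemma gp_V0 (n : ℕ) : GP (V0 n) := by
  intro e he
  have := veron_indep n (by simp) (fun i => ptv n (e i)) (fun i => ptv_ne n _)
    (fun i j hij => ptv_cross n _ _ (he.ne hij))
  simpa only [Function.comp_def, cols_V0] using this

/-- polynomial entries -/
def entry (n : ℕ) (x : Option (Pt n)) (r : Fin (n + 1)) :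
    MvPolynomial ((i : Fin (n - 1)) × (Fin 1 × Fin (n + 1) × Fin (i.1 + 1))) ℂ :=
  match x with
  | none => MvPolynomial.C (veron n (ptv n none) r)
  | some p => MvPolynomial.X ⟨p.1, 0, r, p.2⟩

/-- the minors -/
def minor (n : ℕ) (e : Fin (n + 1) → Option (Pt n)) :
    MvPolynomial ((i : Fin (n - 1)) × (Fin 1 × Fin (n + 1) × Fin (i.1 + 1))) ℂ :=
  (Matrix.of fun c r => entry n (e c) r).det

lemma eval_minor {n : ℕ} (e : Fin (n + 1) → Option (Pt n)) (A : Config n fun _ => 1) :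
    MvPolynomial.eval (fun p => A p.1 p.2.1 p.2.2.1 p.2.2.2) (minor n e) =
      (Matrix.of (cols A ∘ e)).det := by
  rw [minor, RingHom.map_det]
  congr 1
  ext c r
  simp only [RingHom.mapMatrix_apply, Matrix.map_apply, Matrix.of_apply, Function.comp]
  cases e c <;> simp [entry, cols]

lemma gp_generic (n : ℕ) :
    ∃ F : MvPolynomial ((i : Fin (n - 1)) × (Fin 1 × Fin (n + 1) × Fin (i.1 + 1))) ℂ,
    F ≠ 0 ∧ ∀ A : Config n fun _ => 1,
      MvPolynomial.eval (fun p => A p.1 p.2.1 p.2.2.1 p.2.2.2) F ≠ 0 → GP A := by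
  classical
  refine ⟨∏ e with Function.Injective e, minor n e, ?_, ?_⟩
  · refine Finset.prod_ne_zero_iff.2 fun e he h0 => ?_
    have h := gp_V0 n e (Finset.mem_filter.1 he).2
    have h1 := eval_minor e (V0 n)
    rw [h0, map_zero] at h1
    have h2 : IsUnit (Matrix.of (cols (V0 n) ∘ e)) :=
      Matrix.linearIndependent_rows_iff_isUnit.1 h
    rw [Matrix.isUnit_iff_isUnit_det, ← h1] at h2
    exact not_isUnit_zero h2
  · intro A hA e he
    rw [map_prod, Finset.prod_ne_zero_iff] at hA
    have := hA e (Finset.mem_filter.2 ⟨Finset.mem_univ _, he⟩)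
    rw [eval_minor] at this
    exact Matrix.linearIndependent_rows_of_det_ne_zero this

lemma feasible_of (n : ℕ) (K : Fin (n - 1) → Submodule ℂ (Fin (n + 1) → ℂ))
    (H : ∀ A : Config n fun _ => 1, GP A → ∃ g : (Fin (n + 1) → ℂ) ≃ₗ[ℂ] (Fin (n + 1) → ℂ),
      ∀ i, Submodule.span ℂ (Set.range fun j => fun r => A i 0 r j) =
        (K i).map (g : (Fin (n + 1) → ℂ) →ₗ[ℂ] (Fin (n + 1) → ℂ))) :
    Feasible n fun _ => 1 := by
  obtain ⟨F, hF0, hF⟩ := gp_generic n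
  refine ⟨F, hF0, fun A _ hA => ?_⟩
  obtain ⟨g, hg⟩ := H A (hF A hA)
  obtain ⟨h, hh⟩ := H _ (gp_V0 n)
  set φ := h.symm.trans g with hφ
  have hspan : ∀ i x, φ x ∈ Submodule.span ℂ (Set.range fun j => fun r => A i 0 r j) ↔
      x ∈ Submodule.span ℂ (Set.range fun j => veron n (ptv n (some ⟨i, j⟩))) := by
    intro i x
    have h2 : Submodule.span ℂ (Set.range fun j => veron n (ptv n (some ⟨i, j⟩))) = _ := hh i
    rw [hg, h2]
    simp only [Submodule.mem_map, hφ]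
    constructor
    · rintro ⟨y, hy, hxy⟩
      refine ⟨y, hy, ?_⟩
      have : y = h.symm x := g.injective (by simpa using hxy)
      simp [this]
    · rintro ⟨y, hy, rfl⟩
      exact ⟨y, hy, by simp⟩
  set M := LinearMap.toMatrix' (φ : (Fin (n + 1) → ℂ) →ₗ[ℂ] (Fin (n + 1) → ℂ)) with hM
  have hMv : ∀ x, M.mulVec x = φ x := fun x => by
    rw [hM, LinearMap.toMatrix'_mulVec]; rfl
  refine ⟨_, ⟨M, ?_, rfl⟩, ?_⟩
  · rw [hM, LinearMap.det_toMatrix']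
    exact LinearEquiv.isUnit_det' φ
  intro i j
  obtain rfl : j = 0 := Subsingleton.elim _ _
  have hi := i.2
  have hind : LinearIndependent ℂ (fun j : Fin (i.1 + 1) => veron n (ptv n (some ⟨i, j⟩))) := by
    apply veron_indep
    · simp; omega
    · intro k; exact ptv_ne n _
    · intro k l hkl
      exact ptv_cross n _ _ (by simpa using hkl)
  have hne : ∀ k : Fin (i.1 + 1), φ (veron n (ptv n (some ⟨i, k⟩))) ≠ 0 := fun k =>
    (map_ne_zero_iff _ φ.injective).2 (hind.ne_zero k)
  let f : Fin (i.1 + 1) → PP n := fun k => Projectivization.mk ℂ _ (hne k)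
  have hf : Function.Injective f := by
    intro k l hkl
    by_contra hne'
    obtain ⟨c, hc⟩ := (Projectivization.mk_eq_mk_iff' _ _ _ _ _).1 hkl
    rw [← map_smul] at hc
    have hc := φ.injective hc
    have h2 := Fintype.linearIndependent_iff.1 hind (Pi.single k 1 - Pi.single l c) (by
      simp [sub_smul, Finset.sum_sub_distrib, Pi.single_apply, ite_smul, ← hc]) k
    simp [hne'] at h2
  have hset : {P : PP n | ∃ v : Fin 2 → ℂ, v ≠ 0 ∧ ∃ c : ℂ, c ≠ 0 ∧
      P.rep = c • M.mulVec (veron n v)} ∩ projSet (A i 0) = Set.range f := by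
    ext P
    constructor
    · rintro ⟨⟨v, hv, c, hc, hP⟩, hP2⟩
      simp only [projSet, Set.mem_ofPred_eq] at hP2
      rw [hP, Submodule.smul_mem_iff _ hc, hMv, hspan] at hP2
      by_cases hex : ∃ k : Fin (i.1 + 1), v 0 * ptv n (some ⟨i, k⟩) 1 = ptv n (some ⟨i, k⟩) 0 * v 1
      · obtain ⟨k, hk⟩ := hex
        obtain ⟨d, hd, hd'⟩ := cross_prop hv (ptv_ne n _) hk
        refine ⟨k, ?_⟩
        rw [← Projectivization.mk_rep P]
        refine (Projectivization.mk_eq_mk_iff' _ _ _ _ _).2 ⟨d ^ n * c⁻¹, ?_⟩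
        rw [hP, hMv, hd', veron_smul, map_smul, smul_smul]
        congr 1
        field_simp
      · exfalso
        push Not at hex
        have hbig : LinearIndependent ℂ (fun o : Option (Fin (i.1 + 1)) =>
            veron n (o.elim v fun k => ptv n (some ⟨i, k⟩))) := by
          apply veron_indep
          · simp; omega
          · rintro (_ | k)
            · exact hv
            · exact ptv_ne n _
          · rintro (_ | k) (_ | l) hkl
            · exact absurd rfl hkl
            · exact hex l
            · exact (hex k).symm
            · exact ptv_cross n _ _ (by simpa using hkl)
        rw [linearIndependent_option] at hbig
        exact hbig.2 hP2
    · rintro ⟨k, rfl⟩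
      obtain ⟨a, ha⟩ := Projectivization.exists_smul_eq_mk_rep ℂ _ (hne k)
      refine ⟨⟨_, ptv_ne n (some ⟨i, k⟩), a, a.ne_zero, ?_⟩, ?_⟩
      · rw [hMv, ← ha]; rfl
      · simp only [projSet, Set.mem_ofPred_eq, f]
        rw [← ha]
        refine Submodule.smul_mem _ _ ((hspan _ _).2 (Submodule.subset_span ⟨k, rfl⟩))
  rw [hset, Set.ncard_range_of_injective hf]
  simp

lemma exists_equiv {m : ℕ} {N : Fin m → Fin m → ℂ} (hN : LinearIndependent ℂ N) :
    ∃ g : (Fin m → ℂ) ≃ₗ[ℂ] (Fin m → ℂ), ∀ i, g (Pi.single i 1) = N i := by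
  rcases Nat.eq_zero_or_pos m with rfl | hm
  · exact ⟨LinearEquiv.refl _ _, fun i => i.elim0⟩
  have : Nonempty (Fin m) := ⟨⟨0, hm⟩⟩
  refine ⟨(Pi.basisFun ℂ (Fin m)).equiv
    (basisOfLinearIndependentOfCardEqFinrank hN (by simp)) (Equiv.refl _), fun i => ?_⟩
  rw [← Pi.basisFun_apply, Module.Basis.equiv_apply]
  simp

lemma map_span_range {V : Type*} [AddCommGroup V] [Module ℂ V] (g : V ≃ₗ[ℂ] V) {ι : Type*}
    {f h : ι → V} (H : ∀ i, g (f i) = h i) :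
    (Submodule.span ℂ (Set.range f)).map (g : V →ₗ[ℂ] V) = Submodule.span ℂ (Set.range h) := by
  rw [Submodule.map_span, ← Set.range_comp]
  congr 2
  ext i
  simp [H]

lemma li2 {V : Type*} [AddCommGroup V] [Module ℂ V] {v : Fin 2 → V} :
    LinearIndependent ℂ v ↔ ∀ x0 x1 : ℂ, x0 • v 0 + x1 • v 1 = 0 → x0 = 0 ∧ x1 = 0 := by
  rw [Fintype.linearIndependent_iff]
  constructor
  · intro h x0 x1 hx
    have := h ![x0, x1] (by simpa [Fin.sum_univ_two] using hx)
    exact ⟨this 0, this 1⟩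
  · intro h x hx i
    rw [Fin.sum_univ_two] at hx
    obtain ⟨h0, h1⟩ := h _ _ hx
    fin_cases i <;> assumption

lemma li3 {V : Type*} [AddCommGroup V] [Module ℂ V] {v : Fin 3 → V} :
    LinearIndependent ℂ v ↔ ∀ x0 x1 x2 : ℂ, x0 • v 0 + x1 • v 1 + x2 • v 2 = 0 →
      x0 = 0 ∧ x1 = 0 ∧ x2 = 0 := by
  rw [Fintype.linearIndependent_iff]
  constructor
  · intro h x0 x1 x2 hx
    have := h ![x0, x1, x2] (by simpa [Fin.sum_univ_three] using hx)
    exact ⟨this 0, this 1, this 2⟩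
  · intro h x hx i
    rw [Fin.sum_univ_three] at hx
    obtain ⟨h0, h1, h2⟩ := h _ _ _ hx
    fin_cases i <;> assumption

lemma li4 {V : Type*} [AddCommGroup V] [Module ℂ V] {v : Fin 4 → V} :
    LinearIndependent ℂ v ↔ ∀ x0 x1 x2 x3 : ℂ,
      x0 • v 0 + x1 • v 1 + x2 • v 2 + x3 • v 3 = 0 →
      x0 = 0 ∧ x1 = 0 ∧ x2 = 0 ∧ x3 = 0 := by
  rw [Fintype.linearIndependent_iff]
  constructor
  · intro h x0 x1 x2 x3 hx
    have := h ![x0, x1, x2, x3] (by simpa [Fin.sum_univ_four] using hx)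
    exact ⟨this 0, this 1, this 2, this 3⟩
  · intro h x hx i
    rw [Fin.sum_univ_four] at hx
    obtain ⟨h0, h1, h2, h3⟩ := h _ _ _ _ hx
    fin_cases i <;> assumption

lemma li5 {V : Type*} [AddCommGroup V] [Module ℂ V] {v : Fin 5 → V} :
    LinearIndependent ℂ v ↔ ∀ x0 x1 x2 x3 x4 : ℂ,
      x0 • v 0 + x1 • v 1 + x2 • v 2 + x3 • v 3 + x4 • v 4 = 0 →
      x0 = 0 ∧ x1 = 0 ∧ x2 = 0 ∧ x3 = 0 ∧ x4 = 0 := by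
  rw [Fintype.linearIndependent_iff]
  constructor
  · intro h x0 x1 x2 x3 x4 hx
    have := h ![x0, x1, x2, x3, x4] (by simpa [Fin.sum_univ_five] using hx)
    exact ⟨this 0, this 1, this 2, this 3, this 4⟩
  · intro h x hx i
    rw [Fin.sum_univ_five] at hx
    obtain ⟨h0, h1, h2, h3, h4⟩ := h _ _ _ _ _ hx
    fin_cases i <;> assumption

lemma li6 {V : Type*} [AddCommGroup V] [Module ℂ V] {v : Fin 6 → V} :
    LinearIndependent ℂ v ↔ ∀ x0 x1 x2 x3 x4 x5 : ℂ,
      x0 • v 0 + x1 • v 1 + x2 • v 2 + x3 • v 3 + x4 • v 4 + x5 • v 5 = 0 →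
      x0 = 0 ∧ x1 = 0 ∧ x2 = 0 ∧ x3 = 0 ∧ x4 = 0 ∧ x5 = 0 := by
  rw [Fintype.linearIndependent_iff]
  constructor
  · intro h x0 x1 x2 x3 x4 x5 hx
    have := h ![x0, x1, x2, x3, x4, x5] (by simpa [Fin.sum_univ_six] using hx)
    exact ⟨this 0, this 1, this 2, this 3, this 4, this 5⟩
  · intro h x hx i
    rw [Fin.sum_univ_six] at hx
    obtain ⟨h0, h1, h2, h3, h4, h5⟩ := h _ _ _ _ _ _ hx
    fin_cases i <;> assumption

lemma exists_comb {m : ℕ} {N : Fin m → Fin m → ℂ} (hN : LinearIndependent ℂ N)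
    (v : Fin m → ℂ) : ∃ x : Fin m → ℂ, ∑ i, x i • N i = v := by
  rw [← Submodule.mem_span_range_iff_exists_fun,
    hN.span_eq_top_of_card_eq_finrank' (by simp)]
  trivial

lemma mem1 {V : Type*} [AddCommGroup V] [Module ℂ V] {v : Fin 1 → V} (x0 : ℂ) :
    x0 • v 0 ∈ Submodule.span ℂ (Set.range v) :=
  Submodule.mem_span_range_iff_exists_fun _ |>.2 ⟨![x0], by simp⟩

lemma mem2 {V : Type*} [AddCommGroup V] [Module ℂ V] {v : Fin 2 → V} (x0 x1 : ℂ) :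
    x0 • v 0 + x1 • v 1 ∈ Submodule.span ℂ (Set.range v) :=
  Submodule.mem_span_range_iff_exists_fun _ |>.2 ⟨![x0, x1], by simp [Fin.sum_univ_two]⟩

lemma mem3 {V : Type*} [AddCommGroup V] [Module ℂ V] {v : Fin 3 → V} (x0 x1 x2 : ℂ) :
    x0 • v 0 + x1 • v 1 + x2 • v 2 ∈ Submodule.span ℂ (Set.range v) :=
  Submodule.mem_span_range_iff_exists_fun _ |>.2 ⟨![x0, x1, x2], by simp [Fin.sum_univ_three]⟩

lemma mem4 {V : Type*} [AddCommGroup V] [Module ℂ V] {v : Fin 4 → V} (x0 x1 x2 x3 : ℂ) :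
    x0 • v 0 + x1 • v 1 + x2 • v 2 + x3 • v 3 ∈ Submodule.span ℂ (Set.range v) :=
  Submodule.mem_span_range_iff_exists_fun _ |>.2
    ⟨![x0, x1, x2, x3], by simp [Fin.sum_univ_four]⟩

lemma nf5 (a : Fin 1 → Fin 6 → ℂ) (b : Fin 2 → Fin 6 → ℂ) (c : Fin 3 → Fin 6 → ℂ)
    (d : Fin 4 → Fin 6 → ℂ)
    (h1 : LinearIndependent ℂ ![a 0, b 0, b 1, c 0, c 1, c 2])
    (h2 : LinearIndependent ℂ ![b 0, b 1, d 0, d 1, d 2, d 3])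
    (h3 : LinearIndependent ℂ ![c 0, c 1, d 0, d 1, d 2, d 3])
    (h4 : LinearIndependent ℂ ![a 0, b 1, d 0, d 1, d 2, d 3]) :
    ∃ N : Fin 6 → Fin 6 → ℂ, LinearIndependent ℂ N ∧
      Submodule.span ℂ (Set.range a) = Submodule.span ℂ (Set.range ![N 0]) ∧
      Submodule.span ℂ (Set.range b) = Submodule.span ℂ (Set.range ![N 1, N 2]) ∧
      Submodule.span ℂ (Set.range c) = Submodule.span ℂ (Set.range ![N 3, N 4, N 5]) ∧
      Submodule.span ℂ (Set.range d) =
        Submodule.span ℂ (Set.range ![N 3, N 1 + N 4, N 2 + N 5, N 0 + N 1]) := by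
  obtain ⟨p, hp⟩ := exists_comb h2 (a 0)
  obtain ⟨q, hq⟩ := exists_comb h3 (c 2)
  obtain ⟨s, hs⟩ := exists_comb h3 (p 0 • b 0 + p 1 • b 1)
  obtain ⟨t, ht⟩ := exists_comb h3 (- b 1)
  have i1 := li6.1 h1
  have i2 := li6.1 h2
  have i4 := li6.1 h4
  simp [Fin.sum_univ_six] at hp hq hs ht
  simp only [Matrix.cons_val] at i1 i2 i4
  have hp0 : p 0 ≠ 0 := by
    intro h0
    rw [h0] at hp
    have := (i4 (-1) (p 1) (p 2) (p 3) (p 4) (p 5) (by rw [← hp]; module)).1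
    norm_num at this
  -- new basis
  set b' := -(p 0 • b 0 + p 1 • b 1) with hb'
  set e0 := c 2 - q 0 • c 0 - q 1 • c 1 with he0
  set c1 := s 0 • c 0 + s 1 • c 1 with hc1
  set c2 := t 0 • c 0 + t 1 • c 1 with hc2
  clear_value b' e0 c1 c2
  have w0 : e0 = q 2 • d 0 + q 3 • d 1 + q 4 • d 2 + q 5 • d 3 := by
    rw [he0]; linear_combination (norm := module) -hq
  have w1 : b' + c1 = (- s 2) • d 0 + (- s 3) • d 1 + (- s 4) • d 2 + (- s 5) • d 3 := by
    rw [hb']; linear_combination (norm := module) hs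
  have w2 : b 1 + c2 = (- t 2) • d 0 + (- t 3) • d 1 + (- t 4) • d 2 + (- t 5) • d 3 := by
    linear_combination (norm := module) ht
  have w3 : a 0 + b' = p 2 • d 0 + p 3 • d 1 + p 4 • d 2 + p 5 • d 3 := by
    rw [hb']; linear_combination (norm := module) -hp
  -- independence of the new basis
  have hN : ∀ x0 x1 x2 x3 x4 x5 : ℂ,
      x0 • a 0 + x1 • b' + x2 • b 1 + x3 • e0 + x4 • c1 + x5 • c2 = 0 →
      x0 = 0 ∧ x1 = 0 ∧ x2 = 0 ∧ x3 = 0 ∧ x4 = 0 ∧ x5 = 0 := by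
    intro x0 x1 x2 x3 x4 x5 hx
    obtain ⟨k0, k1, k2, k3, k4, k5⟩ := i1 x0 (- x1 * p 0) (x2 - x1 * p 1)
      (- x3 * q 0 + x4 * s 0 + x5 * t 0) (- x3 * q 1 + x4 * s 1 + x5 * t 1) x3
      (by rw [← hx, hb', he0, hc1, hc2]; module)
    have hx1 : x1 = 0 := by simpa [hp0] using k1
    have hx2 : x2 = 0 := by simpa [hx1] using k2
    subst k0 hx1 hx2 k5
    have hcc : x4 • c1 + x5 • c2 = 0 := by rw [← hx]; module
    obtain ⟨m0, m1, -⟩ := i2 (- x4 * p 0) (x5 - x4 * p 1) (x4 * s 2 + x5 * t 2)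
      (x4 * s 3 + x5 * t 3) (x4 * s 4 + x5 * t 4) (x4 * s 5 + x5 * t 5) (by
        linear_combination (norm := module) x4 • w1 + x5 • w2 - hcc - x4 • hb')
    have hx4 : x4 = 0 := by simpa [hp0] using m0
    have hx5 : x5 = 0 := by simpa [hx4] using m1
    exact ⟨rfl, rfl, rfl, rfl, hx4, hx5⟩
  refine ⟨![a 0, b', b 1, e0, c1, c2], li6.2 (by simpa using hN), ?_, ?_, ?_, ?_⟩
  · congr 2
    ext i
    fin_cases i
    simp
  · symm
    apply span_eq_of_indep
    · rw [li2]
      intro x0 x1 hx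
      simp at hx
      obtain ⟨-, k1, k2, -⟩ := hN 0 x0 x1 0 0 0 (by rw [← hx]; module)
      exact ⟨k1, k2⟩
    · intro i
      fin_cases i
      · have := mem2 (v := b) (- p 0) (- p 1)
        convert this using 1
        simp [hb']; module
      · exact Submodule.subset_span ⟨1, rfl⟩
  · symm
    apply span_eq_of_indep
    · rw [li3]
      intro x0 x1 x2 hx
      simp at hx
      obtain ⟨-, -, -, k⟩ := hN 0 0 0 x0 x1 x2 (by rw [← hx]; module)
      exact k
    · intro i
      fin_cases i
      · have := mem3 (v := c) (- q 0) (- q 1) 1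
        convert this using 1
        simp [he0]; module
      · have := mem3 (v := c) (s 0) (s 1) 0
        convert this using 1
        simp [hc1]
      · have := mem3 (v := c) (t 0) (t 1) 0
        convert this using 1
        simp [hc2]
  · symm
    apply span_eq_of_indep
    · rw [li4]
      intro x0 x1 x2 x3 hx
      simp at hx
      obtain ⟨k0, k1, k2, k3, k4, k5⟩ := hN x3 (x1 + x3) x2 x0 x1 x2 (by rw [← hx]; module)
      exact ⟨k3, k4, k5, k0⟩
    · intro i
      fin_cases i
      · simp [w0]; exact mem4 _ _ _ _
      · simp [w1]
        simpa using mem4 (v := d) (- s 2) (- s 3) (- s 4) (- s 5)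
      · simp [w2]
        simpa using mem4 (v := d) (- t 2) (- t 3) (- t 4) (- t 5)
      · simp [w3]; exact mem4 _ _ _ _

lemma nf4 (a : Fin 1 → Fin 5 → ℂ) (b : Fin 2 → Fin 5 → ℂ) (c : Fin 3 → Fin 5 → ℂ)
    (h1 : LinearIndependent ℂ ![a 0, b 0, b 1, c 0, c 1])
    (h2 : LinearIndependent ℂ ![b 0, b 1, c 0, c 1, c 2])
    (h3 : LinearIndependent ℂ ![a 0, b 1, c 0, c 1, c 2]) :
    ∃ N : Fin 5 → Fin 5 → ℂ, LinearIndependent ℂ N ∧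
      Submodule.span ℂ (Set.range a) = Submodule.span ℂ (Set.range ![N 0]) ∧
      Submodule.span ℂ (Set.range b) = Submodule.span ℂ (Set.range ![N 1, N 2]) ∧
      Submodule.span ℂ (Set.range c) =
        Submodule.span ℂ (Set.range ![N 3, N 4, N 0 + N 1]) := by
  obtain ⟨p, hp⟩ := exists_comb h2 (a 0)
  have i1 := li5.1 h1
  have i3 := li5.1 h3
  simp [Fin.sum_univ_five] at hp
  simp only [Matrix.cons_val] at i1 i3
  have hp0 : p 0 ≠ 0 := by
    intro h0
    rw [h0] at hp
    have := (i3 (-1) (p 1) (p 2) (p 3) (p 4) (by rw [← hp]; module)).1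
    norm_num at this
  set b' := -(p 0 • b 0 + p 1 • b 1) with hb'
  have w3 : a 0 + b' = p 2 • c 0 + p 3 • c 1 + p 4 • c 2 := by
    rw [hb']; linear_combination (norm := module) -hp
  have hN : ∀ x0 x1 x2 x3 x4 : ℂ,
      x0 • a 0 + x1 • b' + x2 • b 1 + x3 • c 0 + x4 • c 1 = 0 →
      x0 = 0 ∧ x1 = 0 ∧ x2 = 0 ∧ x3 = 0 ∧ x4 = 0 := by
    intro x0 x1 x2 x3 x4 hx
    obtain ⟨k0, k1, k2, k3, k4⟩ := i1 x0 (- x1 * p 0) (x2 - x1 * p 1) x3 x4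
      (by rw [← hx, hb']; module)
    have hx1 : x1 = 0 := by simpa [hp0] using k1
    have hx2 : x2 = 0 := by simpa [hx1] using k2
    exact ⟨k0, hx1, hx2, k3, k4⟩
  refine ⟨![a 0, b', b 1, c 0, c 1], li5.2 (by simpa using hN), ?_, ?_, ?_⟩
  · congr 2
    ext i
    fin_cases i
    simp
  · symm
    apply span_eq_of_indep
    · rw [li2]
      intro x0 x1 hx
      simp at hx
      obtain ⟨-, k1, k2, -⟩ := hN 0 x0 x1 0 0 (by rw [← hx]; module)
      exact ⟨k1, k2⟩
    · intro i
      fin_cases i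
      · have := mem2 (v := b) (- p 0) (- p 1)
        convert this using 1
        simp [hb']; module
      · exact Submodule.subset_span ⟨1, rfl⟩
  · symm
    apply span_eq_of_indep
    · rw [li3]
      intro x0 x1 x2 hx
      simp at hx
      obtain ⟨k0, -, -, k3, k4⟩ := hN x2 x2 0 x0 x1 (by rw [← hx]; module)
      exact ⟨k3, k4, k0⟩
    · intro i
      fin_cases i
      · exact Submodule.subset_span ⟨0, rfl⟩
      · exact Submodule.subset_span ⟨1, rfl⟩
      · simp [w3]; exact mem3 _ _ _

lemma feasible3 : Feasible 3 fun _ => 1 := by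
  let e : Fin 4 → Fin 4 → ℂ := fun i => Pi.single i 1
  apply feasible_of 3 ![Submodule.span ℂ (Set.range ![e 0]), Submodule.span ℂ (Set.range ![e 1, e 2])]
  intro A hA
  have h := hA ![some ⟨0, 0⟩, some ⟨1, 0⟩, some ⟨1, 1⟩, none] (by decide)
  obtain ⟨g, hg⟩ := exists_equiv h
  refine ⟨g, fun i => ?_⟩
  fin_cases i
  · symm
    apply map_span_range
    intro j
    fin_cases j
    exact hg 0
  · symm
    apply map_span_range
    intro j
    fin_cases j
    · exact hg 1
    · exact hg 2

lemma comp_vec {n m : ℕ} (A : Config n fun _ => 1) (e : Fin m → Option (Pt n))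
    {w : Fin m → Fin (n + 1) → ℂ} (hw : ∀ i, cols A (e i) = w i)
    (h : LinearIndependent ℂ (cols A ∘ e)) : LinearIndependent ℂ w := by
  have : cols A ∘ e = w := funext hw
  rwa [this] at h

lemma feasible4 : Feasible 4 fun _ => 1 := by
  let e : Fin 5 → Fin 5 → ℂ := fun i => Pi.single i 1
  apply feasible_of 4 ![Submodule.span ℂ (Set.range ![e 0]), Submodule.span ℂ (Set.range ![e 1, e 2]),
    Submodule.span ℂ (Set.range ![e 3, e 4, e 0 + e 1])]
  intro A hA
  let a : Fin 1 → Fin 5 → ℂ := fun j r => A 0 0 r j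
  let b : Fin 2 → Fin 5 → ℂ := fun j r => A 1 0 r j
  let c : Fin 3 → Fin 5 → ℂ := fun j r => A 2 0 r j
  obtain ⟨N, hN, h1, h2, h3⟩ := nf4 a b c
    (comp_vec A ![some ⟨0, 0⟩, some ⟨1, 0⟩, some ⟨1, 1⟩, some ⟨2, 0⟩, some ⟨2, 1⟩]
      (by intro i; fin_cases i <;> rfl) (hA _ (by decide)))
    (comp_vec A ![some ⟨1, 0⟩, some ⟨1, 1⟩, some ⟨2, 0⟩, some ⟨2, 1⟩, some ⟨2, 2⟩]
      (by intro i; fin_cases i <;> rfl) (hA _ (by decide)))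
    (comp_vec A ![some ⟨0, 0⟩, some ⟨1, 1⟩, some ⟨2, 0⟩, some ⟨2, 1⟩, some ⟨2, 2⟩]
      (by intro i; fin_cases i <;> rfl) (hA _ (by decide)))
  obtain ⟨g, hg⟩ := exists_equiv hN
  refine ⟨g, fun i => ?_⟩
  fin_cases i
  · refine h1.trans (map_span_range g ?_).symm
    intro j
    fin_cases j
    exact hg 0
  · refine h2.trans (map_span_range g ?_).symm
    intro j
    fin_cases j
    · exact hg 1
    · exact hg 2
  · refine h3.trans (map_span_range g ?_).symm
    intro j
    fin_cases j
    · exact hg 3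
    · exact hg 4
    · simp [e, hg]

lemma feasible5 : Feasible 5 fun _ => 1 := by
  let e : Fin 6 → Fin 6 → ℂ := fun i => Pi.single i 1
  apply feasible_of 5 ![Submodule.span ℂ (Set.range ![e 0]), Submodule.span ℂ (Set.range ![e 1, e 2]),
    Submodule.span ℂ (Set.range ![e 3, e 4, e 5]),
    Submodule.span ℂ (Set.range ![e 3, e 1 + e 4, e 2 + e 5, e 0 + e 1])]
  intro A hA
  let a : Fin 1 → Fin 6 → ℂ := fun j r => A 0 0 r j
  let b : Fin 2 → Fin 6 → ℂ := fun j r => A 1 0 r j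
  let c : Fin 3 → Fin 6 → ℂ := fun j r => A 2 0 r j
  let d : Fin 4 → Fin 6 → ℂ := fun j r => A 3 0 r j
  obtain ⟨N, hN, h1, h2, h3, h4⟩ := nf5 a b c d
    (comp_vec A ![some ⟨0, 0⟩, some ⟨1, 0⟩, some ⟨1, 1⟩, some ⟨2, 0⟩, some ⟨2, 1⟩, some ⟨2, 2⟩]
      (by intro i; fin_cases i <;> rfl) (hA _ (by decide)))
    (comp_vec A ![some ⟨1, 0⟩, some ⟨1, 1⟩, some ⟨3, 0⟩, some ⟨3, 1⟩, some ⟨3, 2⟩, some ⟨3, 3⟩]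
      (by intro i; fin_cases i <;> rfl) (hA _ (by decide)))
    (comp_vec A ![some ⟨2, 0⟩, some ⟨2, 1⟩, some ⟨3, 0⟩, some ⟨3, 1⟩, some ⟨3, 2⟩, some ⟨3, 3⟩]
      (by intro i; fin_cases i <;> rfl) (hA _ (by decide)))
    (comp_vec A ![some ⟨0, 0⟩, some ⟨1, 1⟩, some ⟨3, 0⟩, some ⟨3, 1⟩, some ⟨3, 2⟩, some ⟨3, 3⟩]
      (by intro i; fin_cases i <;> rfl) (hA _ (by decide)))
  obtain ⟨g, hg⟩ := exists_equiv hN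
  refine ⟨g, fun i => ?_⟩
  fin_cases i
  · refine h1.trans (map_span_range g ?_).symm
    intro j
    fin_cases j
    exact hg 0
  · refine h2.trans (map_span_range g ?_).symm
    intro j
    fin_cases j
    · exact hg 1
    · exact hg 2
  · refine h3.trans (map_span_range g ?_).symm
    intro j
    fin_cases j
    · exact hg 3
    · exact hg 4
    · exact hg 5
  · refine h4.trans (map_span_range g ?_).symm
    intro j
    fin_cases j
    · exact hg 3
    · simp [e, hg]
    · simp [e, hg]
    · simp [e, hg]

/-- The weight vector `(1,…,1)` in `ℙⁿ` (one generic subspace of each dimension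
`0 ≤ i ≤ n-2`) is feasible for `3 ≤ n ≤ 5` and non-feasible for `n ≥ 8`. -/
theorem one_space_in_each_dimension (n : ℕ) (hn : 3 ≤ n) :
    (n ≤ 5 → Feasible n fun _ => 1) ∧ (8 ≤ n → NonFeasible n fun _ => 1) := by
  refine ⟨fun h5 => ?_, nonfeasible n⟩
  obtain rfl | rfl | rfl : n = 3 ∨ n = 4 ∨ n = 5 := by omega
  · exact feasible3
  · exact feasible4
  · exact feasible5

end
end

section
/- Let m ≥ 1 and let s be an integer with m + 2 ≤ s ≤ 2m + 1. For s generic points P₁,…,P_s of ℙ¹(ℂ) × ℙᵐ(ℂ) × ℙᵐ(ℂ), the ℂ-vector space of multihomogeneous polynomials of multidegree (2,1,1) on ℂ² × ℂ^{m+1} × ℂ^{m+1} all of whose first-order partial derivatives vanish at a representative of each Pᵢ has dimension strictly greater than max(0, 3(m+1)² − s(2m+2)). By Terracini's lemma, this means the s-th higher secant variety of the Segre–Veronese embedding of ℙ¹ × ℙᵐ × ℙᵐ by forms of multidegree (2,1,1) does not have the expected dimension, i.e., this Segre–Veronese variety is s-defective. -/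
noncomputable section

/-- Variable index type for forms on `ℂ² × ℂ^{m+1} × ℂ^{m+1}`:
`x₀,x₁; y₀,…,y_m; z₀,…,z_m`. -/
abbrev SVIdx (m : ℕ) := Fin 2 ⊕ Fin (m + 1) ⊕ Fin (m + 1)

/-- The subspace of multihomogeneous polynomials of multidegree `(2,1,1)` on
`ℂ² × ℂ^{m+1} × ℂ^{m+1}`: every monomial in the support has degree `2` in the
`x`-variables, degree `1` in the `y`-variables and degree `1` in the `z`-variables. -/
def forms211 (m : ℕ) : Submodule ℂ (MvPolynomial (SVIdx m) ℂ) where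
  carrier := {p | ∀ d ∈ p.support,
    (∑ x : Fin 2, d (Sum.inl x)) = 2 ∧
    (∑ y : Fin (m + 1), d (Sum.inr (Sum.inl y))) = 1 ∧
    (∑ z : Fin (m + 1), d (Sum.inr (Sum.inr z))) = 1}
  zero_mem' := by simp
  add_mem' := by
    intro p q hp hq d hd
    rcases Finset.mem_union.mp (MvPolynomial.support_add hd) with h | h
    · exact hp d h
    · exact hq d h
  smul_mem' := by
    intro c p hp d hd
    exact hp d (MvPolynomial.support_smul hd)

/-- The subspace of polynomials all of whose first-order partial derivatives vanish at
each of the points `pt i` (for a nonzero representative this is the double-point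
condition at the corresponding point of `ℙ¹ × ℙᵐ × ℙᵐ`). -/
def doublePtConditions (m s : ℕ) (pt : Fin s → SVIdx m → ℂ) :
    Submodule ℂ (MvPolynomial (SVIdx m) ℂ) :=
  ⨅ (i : Fin s) (x : SVIdx m),
    LinearMap.ker ((MvPolynomial.aeval (R := ℂ) (pt i)).toLinearMap ∘ₗ
      (MvPolynomial.pderiv x).toLinearMap)

def svL (m : ℕ) (ι : Fin (m+1) → SVIdx m) (u : Fin 2 × Fin (m+1) → ℂ) :
    MvPolynomial (SVIdx m) ℂ :=
  ∑ q : Fin 2 × Fin (m+1), u q • (MvPolynomial.X (Sum.inl q.1) * MvPolynomial.X (ι q.2))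

def svE (m s : ℕ) (a : Fin s → Fin 2 → ℂ) (b : Fin s → Fin (m+1) → ℂ) :
    (Fin 2 × Fin (m+1) → ℂ) →ₗ[ℂ] (Fin s → ℂ) :=
  LinearMap.pi fun i => ∑ q : Fin 2 × Fin (m+1), (a i q.1 * b i q.2) • LinearMap.proj q

theorem svE_apply (m s : ℕ) (a : Fin s → Fin 2 → ℂ) (b : Fin s → Fin (m+1) → ℂ) (u) (i) :
    svE m s a b u i = ∑ q : Fin 2 × Fin (m+1), u q * (a i q.1 * b i q.2) := by
  simp [svE, mul_comm, LinearMap.sum_apply]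

theorem svE_ker (m s : ℕ) (a : Fin s → Fin 2 → ℂ) (b : Fin s → Fin (m+1) → ℂ) :
    2 * (m+1) ≤ Module.finrank ℂ (LinearMap.ker (svE m s a b)) + s := by
  have h := LinearMap.finrank_range_add_finrank_ker (svE m s a b)
  have h2 := Submodule.finrank_le (LinearMap.range (svE m s a b))
  simp at h h2
  omega

/-- restriction to the first row is injective on the kernel -/
theorem svE_inj (m s : ℕ) (hs : m + 1 ≤ s) (a : Fin s → Fin 2 → ℂ) (b : Fin s → Fin (m+1) → ℂ)
    (ha : ∀ i : Fin (m+1), a (Fin.castLE hs i) 1 ≠ 0)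
    (hb : (Matrix.of fun i j : Fin (m+1) => b (Fin.castLE hs i) j).det ≠ 0)
    (u : Fin 2 × Fin (m+1) → ℂ) (hu : u ∈ LinearMap.ker (svE m s a b))
    (h0 : ∀ j, u (0, j) = 0) : u = 0 := by
  have h1 : (fun j => u (1, j)) = 0 := by
    apply Matrix.eq_zero_of_mulVec_eq_zero hb
    funext i
    have := congrFun (LinearMap.mem_ker.mp hu) (Fin.castLE hs i)
    rw [svE_apply, Fintype.sum_prod_type] at this
    simp only [Fin.sum_univ_two, h0, zero_mul, Finset.sum_const_zero, zero_add,
      Pi.zero_apply] at this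
    have h3 : a (Fin.castLE hs i) 1 * ∑ j, b (Fin.castLE hs i) j * u (1, j) = 0 := by
      rw [← this, Finset.mul_sum]
      exact Finset.sum_congr rfl fun j _ => by ring
    simpa [Matrix.mulVec, dotProduct] using (mul_eq_zero.mp h3).resolve_left (ha i)
  funext ⟨k, j⟩
  fin_cases k
  · exact h0 j
  · exact congrFun h1 j

theorem svL_mul_mem (m : ℕ) (u v : Fin 2 × Fin (m+1) → ℂ) :
    svL m (fun j => Sum.inr (Sum.inl j)) u * svL m (fun j => Sum.inr (Sum.inr j)) v
      ∈ forms211 m := by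
  unfold svL
  rw [Finset.sum_mul_sum]
  refine Submodule.sum_mem _ fun p _ => Submodule.sum_mem _ fun q _ => ?_
  rw [smul_mul_smul_comm]
  refine Submodule.smul_mem _ _ ?_
  intro d hd
  simp only [MvPolynomial.X, MvPolynomial.monomial_mul] at hd
  have := MvPolynomial.support_monomial_subset hd
  rw [Finset.mem_singleton] at this
  subst this
  simp [Finsupp.single_apply, Finset.sum_add_distrib]

theorem svL_eval (m : ℕ) (ι : Fin (m+1) → SVIdx m) (u) (p : SVIdx m → ℂ) :
    MvPolynomial.aeval (R := ℂ) p (svL m ι u) = ∑ q : Fin 2 × Fin (m+1), u q * (p (Sum.inl q.1) * p (ι q.2)) := by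
  simp [svL]

theorem svL_double (m s : ℕ) (a : Fin s → Fin 2 → ℂ) (b c : Fin s → Fin (m+1) → ℂ)
    (u v : Fin 2 × Fin (m+1) → ℂ) (hu : u ∈ LinearMap.ker (svE m s a b))
    (hv : v ∈ LinearMap.ker (svE m s a c)) :
    svL m (fun j => Sum.inr (Sum.inl j)) u * svL m (fun j => Sum.inr (Sum.inr j)) v
      ∈ doublePtConditions m s fun i => Sum.elim (a i) (Sum.elim (b i) (c i)) := by
  simp only [doublePtConditions, Submodule.mem_iInf, LinearMap.mem_ker]
  intro i x
  have h1 := congrFun (LinearMap.mem_ker.mp hu) i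
  have h2 := congrFun (LinearMap.mem_ker.mp hv) i
  rw [svE_apply] at h1 h2
  have e1 : MvPolynomial.aeval (R := ℂ) (Sum.elim (a i) (Sum.elim (b i) (c i)))
      (svL m (fun j => Sum.inr (Sum.inl j)) u) = 0 := by
    rw [svL_eval]; exact h1
  have e2 : MvPolynomial.aeval (R := ℂ) (Sum.elim (a i) (Sum.elim (b i) (c i)))
      (svL m (fun j => Sum.inr (Sum.inr j)) v) = 0 := by
    rw [svL_eval]; exact h2
  change MvPolynomial.aeval (R := ℂ) (Sum.elim (a i) (Sum.elim (b i) (c i)))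
    (MvPolynomial.pderiv x _) = 0
  rw [Derivation.leibniz, map_add, smul_eq_mul, smul_eq_mul, map_mul, map_mul, e1, e2]
  simp

theorem forms211_fin (m : ℕ) : Module.Finite ℂ (forms211 m) := by
  have hf : {d : SVIdx m →₀ ℕ | ∀ i, d i ≤ 2}.Finite := by
    refine (Set.finite_Iic (Finsupp.equivFunOnFinite.symm fun _ : SVIdx m => 2)).subset ?_
    intro d hd i
    exact hd i
  have := hf.to_subtype
  have h1 : Module.Finite ℂ (MvPolynomial.restrictSupport ℂ {d : SVIdx m →₀ ℕ | ∀ i, d i ≤ 2}) :=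
    Module.Finite.of_basis (MvPolynomial.basisRestrictSupport ℂ _)
  refine Submodule.finiteDimensional_of_le (S₂ := MvPolynomial.restrictSupport ℂ {d : SVIdx m →₀ ℕ | ∀ i, d i ≤ 2}) ?_
  intro p hp
  rw [MvPolynomial.mem_restrictSupport_iff]
  intro d hd
  obtain ⟨hx, hy, hz⟩ := hp d hd
  rintro (i | i | i)
  · have := Finset.single_le_sum (f := fun x => d (Sum.inl x)) (fun _ _ => Nat.zero_le _) (Finset.mem_univ i)
    omega
  · have := Finset.single_le_sum (f := fun x => d (Sum.inr (Sum.inl x))) (fun _ _ => Nat.zero_le _) (Finset.mem_univ i)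
    omega
  · have := Finset.single_le_sum (f := fun x => d (Sum.inr (Sum.inr x))) (fun _ _ => Nat.zero_le _) (Finset.mem_univ i)
    omega

theorem sv_bound (m s : ℕ) (hs : m + 1 ≤ s) (a : Fin s → Fin 2 → ℂ) (b c : Fin s → Fin (m+1) → ℂ)
    (ha : ∀ i : Fin (m+1), a (Fin.castLE hs i) 1 ≠ 0)
    (hb : (Matrix.of fun i j : Fin (m+1) => b (Fin.castLE hs i) j).det ≠ 0)
    (hc : (Matrix.of fun i j : Fin (m+1) => c (Fin.castLE hs i) j).det ≠ 0) :
    Module.finrank ℂ (LinearMap.ker (svE m s a b)) * Module.finrank ℂ (LinearMap.ker (svE m s a c))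
      ≤ Module.finrank ℂ ↥(forms211 m ⊓
                doublePtConditions m s fun i => Sum.elim (a i) (Sum.elim (b i) (c i))) := by
  have := forms211_fin m
  have : Module.Finite ℂ ↥(forms211 m ⊓
      doublePtConditions m s fun i => Sum.elim (a i) (Sum.elim (b i) (c i))) :=
    Submodule.finiteDimensional_of_le inf_le_left
  let e := Module.finBasis ℂ (LinearMap.ker (svE m s a b))
  let f := Module.finBasis ℂ (LinearMap.ker (svE m s a c))
  let w : Fin (Module.finrank ℂ (LinearMap.ker (svE m s a b))) ×
      Fin (Module.finrank ℂ (LinearMap.ker (svE m s a c))) → ↥(forms211 m ⊓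
      doublePtConditions m s fun i => Sum.elim (a i) (Sum.elim (b i) (c i))) := fun p =>
    ⟨svL m (fun j => Sum.inr (Sum.inl j)) (e p.1) * svL m (fun j => Sum.inr (Sum.inr j)) (f p.2),
      svL_mul_mem _ _ _, svL_double m s a b c _ _ (e p.1).2 (f p.2).2⟩
  have key : ∀ b' : Fin s → Fin (m+1) → ℂ,
      (Matrix.of fun i j : Fin (m+1) => b' (Fin.castLE hs i) j).det ≠ 0 →
      ∀ (n : ℕ) (g : Module.Basis (Fin n) ℂ (LinearMap.ker (svE m s a b'))) (t : Fin n → ℂ),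
      (∀ j, ∑ p, t p * (g p : Fin 2 × Fin (m+1) → ℂ) (0, j) = 0) → ∀ p, t p = 0 := by
    intro b' hb' n g t ht
    have hz : ∑ p, t p • g p = 0 := by
      apply Subtype.ext
      refine svE_inj m s hs a b' ha hb' _ (Subtype.property _) fun j => ?_
      rw [← ht j]
      simp [Finset.sum_apply]
    exact Fintype.linearIndependent_iff.mp g.linearIndependent t hz
  have hw : LinearIndependent ℂ w := by
    rw [Fintype.linearIndependent_iff]
    intro t ht
    have hj : ∀ j l, ∑ p, (∑ q, t (p, q) * (f q : Fin 2 × Fin (m+1) → ℂ) (0, l)) *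
        (e p : Fin 2 × Fin (m+1) → ℂ) (0, j) = 0 := by
      intro j l
      have h := congrArg (fun P => MvPolynomial.aeval (R := ℂ) (Sum.elim (Pi.single 0 1)
        (Sum.elim (Pi.single j 1) (Pi.single l 1)) : SVIdx m → ℂ) (Subtype.val P)) ht
      simp only [Submodule.coe_sum, Submodule.coe_smul, map_sum, map_smul, w, map_mul, svL_eval,
        Fintype.sum_prod_type] at h
      simp [Pi.single_apply] at h
      rw [← h]
      refine Finset.sum_congr rfl fun p _ => ?_
      rw [Finset.sum_mul]
      refine Finset.sum_congr rfl fun q _ => ?_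
      ring
    rintro ⟨p, q⟩
    refine key c hc _ f (fun q => t (p, q)) (fun l => ?_) q
    exact key b hb _ e (fun p => ∑ q, t (p, q) * (f q : Fin 2 × Fin (m+1) → ℂ) (0, l))
      (fun j => hj j l) p
  simpa using hw.fintype_card_le_finrank

/-- Defectivity of the Segre–Veronese variety `ℙ¹ × ℙᵐ × ℙᵐ` embedded in multidegree
`(2,1,1)`: for `m + 2 ≤ s ≤ 2m + 1` and `s` generic points of `ℙ¹ × ℙᵐ × ℙᵐ` (given by
generic nonzero representative vectors `a i, b i, c i`), the space of multidegree
`(2,1,1)` forms whose first-order partials all vanish at the `s` points has dimension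
strictly greater than `max(0, 3(m+1)² - s(2m+2))` (natural subtraction); by Terracini's
lemma the `s`-th secant variety does not have the expected dimension, i.e. the variety
is `s`-defective. -/
theorem segre_veronese_211_defective (m s : ℕ) (hm : 1 ≤ m)
    (hs1 : m + 2 ≤ s) (hs2 : s ≤ 2 * m + 1) :
    ∃ F : MvPolynomial
        ((Fin s × Fin 2) ⊕ (Fin s × Fin (m + 1)) ⊕ (Fin s × Fin (m + 1))) ℂ,
      F ≠ 0 ∧
        ∀ (a : Fin s → Fin 2 → ℂ) (b : Fin s → Fin (m + 1) → ℂ)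
          (c : Fin s → Fin (m + 1) → ℂ),
          (∀ i, a i ≠ 0) → (∀ i, b i ≠ 0) → (∀ i, c i ≠ 0) →
          MvPolynomial.eval
            (Sum.elim (fun q => a q.1 q.2)
              (Sum.elim (fun q => b q.1 q.2) (fun q => c q.1 q.2))) F ≠ 0 →
          3 * (m + 1) ^ 2 - s * (2 * m + 2) <
            Module.finrank ℂ
              ↥(forms211 m ⊓
                doublePtConditions m s fun i => Sum.elim (a i) (Sum.elim (b i) (c i))) := by
  have hs : m + 1 ≤ s := by omega
  let F1 : MvPolynomial
        ((Fin s × Fin 2) ⊕ (Fin s × Fin (m + 1)) ⊕ (Fin s × Fin (m + 1))) ℂ :=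
    ∏ i : Fin (m+1), MvPolynomial.X (Sum.inl (Fin.castLE hs i, 1))
  let F2 : MvPolynomial
        ((Fin s × Fin 2) ⊕ (Fin s × Fin (m + 1)) ⊕ (Fin s × Fin (m + 1))) ℂ :=
    (Matrix.of fun i j : Fin (m+1) =>
      MvPolynomial.X (Sum.inr (Sum.inl (Fin.castLE hs i, j)))).det
  let F3 : MvPolynomial
        ((Fin s × Fin 2) ⊕ (Fin s × Fin (m + 1)) ⊕ (Fin s × Fin (m + 1))) ℂ :=
    (Matrix.of fun i j : Fin (m+1) =>
      MvPolynomial.X (Sum.inr (Sum.inr (Fin.castLE hs i, j)))).det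
  have ev : ∀ (a : Fin s → Fin 2 → ℂ) (b c : Fin s → Fin (m + 1) → ℂ),
      MvPolynomial.eval
            (Sum.elim (fun q => a q.1 q.2)
              (Sum.elim (fun q => b q.1 q.2) (fun q => c q.1 q.2))) (F1 * F2 * F3) =
      (∏ i : Fin (m+1), a (Fin.castLE hs i) 1) *
        (Matrix.of fun i j : Fin (m+1) => b (Fin.castLE hs i) j).det *
        (Matrix.of fun i j : Fin (m+1) => c (Fin.castLE hs i) j).det := by
    intro a b c
    simp only [F1, F2, F3, map_mul, map_prod, RingHom.map_det, MvPolynomial.eval_X, Sum.elim_inl]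
    congr 2
    · congr 1
      ext i j
      simp
    · ext i j
      simp
  refine ⟨F1 * F2 * F3, ?_, ?_⟩
  · intro h
    have h1 := ev (fun _ _ => 1) (fun i j => if i.val = j.val then 1 else 0)
      (fun i j => if i.val = j.val then 1 else 0)
    have hI : (Matrix.of fun i j : Fin (m+1) =>
        (if (Fin.castLE hs i).val = j.val then 1 else 0 : ℂ)) = 1 := by
      ext i j
      simp [Matrix.one_apply, Fin.ext_iff]
    rw [h, hI] at h1
    simp at h1
  · intro a b c _ _ _ hF
    rw [ev] at hF
    obtain ⟨h12, hc⟩ := mul_ne_zero_iff.mp hF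
    obtain ⟨h1, hb⟩ := mul_ne_zero_iff.mp h12
    have ha : ∀ i : Fin (m+1), a (Fin.castLE hs i) 1 ≠ 0 := fun i =>
      Finset.prod_ne_zero_iff.mp h1 i (Finset.mem_univ i)
    refine lt_of_lt_of_le ?_ (sv_bound m s hs a b c ha hb hc)
    have k1 := svE_ker m s a b
    have k2 := svE_ker m s a c
    obtain ⟨k, hk⟩ : ∃ k, 2 * (m+1) = k + s := ⟨2 * (m+1) - s, by omega⟩
    have l1 : k ≤ Module.finrank ℂ (LinearMap.ker (svE m s a b)) := by omega
    have l2 : k ≤ Module.finrank ℂ (LinearMap.ker (svE m s a c)) := by omega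
    refine lt_of_lt_of_le ?_ (Nat.mul_le_mul l1 l2)
    obtain ⟨r, rfl⟩ : ∃ r, s = m + 1 + (r + 1) := ⟨s - (m + 2), by omega⟩
    have hkp : m = k + r := by omega
    subst hkp
    have hk0 : 0 < k := by omega
    have : 0 < k * k := Nat.mul_pos hk0 hk0
    have h5 : 3 * (k + r + 1) ^ 2 < k * k + (k + r + 1 + (r + 1)) * (2 * (k + r) + 2) := by
      nlinarith
    omega


end
end
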